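/- arXiv:2105.14508 — 4 statements merged into one kernel-verified Lean document; each statement's English description precedes it below -/
import Mathlib

section
/- Let q > 2 be an even prime power, r ≥ 3, and let B be the hypersurface of PG(r,q²) defined below (with the stated conditions on α and β). Then B spans PG(r,q²), the projective code C(B) has length N = q^{2r−1}+q^{2(r−2)}+q^{2(r−3)}+⋯+q²+1 and dimension r+1, and C(B) is q-divisible: for every hyperplane Σ of PG(r,q²), q divides |B| − |B ∩ Σ|. -/
/-- The affine equation
`x_r^q − x_r + α^q(x₁^{2q}+⋯+x_{r−1}^{2q}) − α(x₁²+⋯+x_{r−1}²)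
  = (β^q−β)(x₁^{q+1}+⋯+x_{r−1}^{q+1})`. -/
def affEq {F : Type*} [Field F] (q r : ℕ) (α β : F) (x : Fin (r + 1) → F) : Prop :=
  x (Fin.last r) ^ q - x (Fin.last r)
      + α ^ q * (∑ i : Fin (r + 1), if 1 ≤ i.1 ∧ i.1 < r then x i ^ (2 * q) else 0)
      - α * (∑ i : Fin (r + 1), if 1 ≤ i.1 ∧ i.1 < r then x i ^ 2 else 0)
    = (β ^ q - β) * (∑ i : Fin (r + 1), if 1 ≤ i.1 ∧ i.1 < r then x i ^ (q + 1) else 0)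

/-- The hypersurface `B` of `PG(r,q²)` (in the `q` even form): the affine points
(X₀ ≠ 0) whose affine coordinates satisfy `affEq`, together with the points at
infinity (X₀ = 0) satisfying `X₁ + ⋯ + X_{r−1} = 0`. -/
noncomputable def BsetE (F : Type*) [Field F] (q r : ℕ) (α β : F) :
    Set (Projectivization F (Fin (r + 1) → F)) :=
  {P | (P.rep 0 ≠ 0 ∧ affEq q r α β fun i => P.rep i / P.rep 0) ∨
       (P.rep 0 = 0 ∧ (∑ i : Fin (r + 1), if 1 ≤ i.1 ∧ i.1 < r then P.rep i else 0) = 0)}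

/-- The projective code of the projective system `V`, as the linear map sending a
functional `f` to the codeword of its evaluations at the representative vectors of
the points of `V`; the code itself is the range of this map. -/
noncomputable def codeMap {F W : Type*} [Field F] [AddCommGroup W] [Module F W]
    (V : Set (Projectivization F W)) : Module.Dual F W →ₗ[F] (↥V → F) where
  toFun f := fun P => f P.1.rep
  map_add' f g := rfl
  map_smul' a f := rfl




structure Hyp (F : Type) [Field F] [Fintype F] (q : ℕ) : Prop where
  one_lt : 1 < q
  card : Nat.card F = q ^ 2
  two : ∀ x : F, x + x = 0
  add : ∀ x y : F, (x + y) ^ q = x ^ q + y ^ q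
  inv : ∀ x : F, (x ^ q) ^ q = x
  sqrt : ∀ x : F, ∃ y, y ^ 2 = x
  sqinj : ∀ x y : F, x ^ 2 = y ^ 2 → x = y

theorem Hyp.mk' (q : ℕ) (hq : IsPrimePow q) (hqeven : Even q)
    (F : Type) [Field F] [Fintype F] (hF : Fintype.card F = q ^ 2) : Hyp F q := by
  obtain ⟨p, m, hp, hm, rfl⟩ := hq
  have hp := hp.nat_prime
  have hp2 : p = 2 := by
    have := hp.even_iff.1 ((Nat.even_pow.1 hqeven).1)
    exact this
  subst hp2
  obtain ⟨c, hc⟩ := CharP.exists F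
  obtain ⟨n, hcp, hcard⟩ := FiniteField.card F c
  have : 2 ∣ c ^ (n : ℕ) := by
    rw [← hcard, hF, ← pow_mul]
    exact dvd_pow_self _ (by positivity)
  have hc2 : c = 2 := ((Nat.prime_dvd_prime_iff_eq Nat.prime_two hcp).1
    (Nat.prime_two.dvd_of_dvd_pow this)).symm
  subst hc2
  have hinj : ∀ x y : F, x ^ 2 = y ^ 2 → x = y := fun x y h => by
    have h0 : (x - y) ^ 2 = 0 := by rw [sub_pow_char, h, sub_self]
    exact sub_eq_zero.1 (pow_eq_zero_iff (two_ne_zero) |>.1 h0)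
  refine ⟨Nat.one_lt_two_pow hm.ne', by rw [Nat.card_eq_fintype_card, hF],
    CharTwo.add_self_eq_zero, fun x y => add_pow_char_pow x y 2 m, fun x => ?_, ?_, hinj⟩
  · rw [← pow_mul, ← sq, ← hF]; exact FiniteField.pow_card x
  · exact fun x => (Finite.injective_iff_surjective (f := fun x : F => x ^ 2)).1 (fun x y h => hinj x y h) x

namespace Hyp
variable {F : Type} [Field F] [Fintype F] {q : ℕ}

/-- the trace -/
def T (h : Hyp F q) : F →+ F where
  toFun z := z ^ q + z
  map_zero' := by simp [show q ≠ 0 by have := h.one_lt; omega]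
  map_add' x y := by rw [h.add]; ring

theorem T_apply (h : Hyp F q) (z : F) : h.T z = z ^ q + z := rfl

theorem eq_of_add (h : Hyp F q) {x y : F} : x + y = 0 ↔ x = y := by
  constructor
  · intro e
    linear_combination e - h.two y
  · rintro rfl; exact h.two x

theorem mem_ker (h : Hyp F q) (z : F) : h.T z = 0 ↔ z ^ q = z := by
  rw [T_apply, h.eq_of_add]

theorem T_T (h : Hyp F q) (z : F) : h.T (h.T z) = 0 := by
  rw [T_apply, T_apply, h.add, h.inv, add_comm (z ^ q) z]
  exact h.two _

theorem card_ker_le (h : Hyp F q) : Nat.card h.T.ker ≤ q := by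
  classical
  have hne : (Polynomial.X ^ q - Polynomial.X : Polynomial F) ≠ 0 :=
    FiniteField.X_pow_card_sub_X_ne_zero F h.one_lt
  have hd := FiniteField.X_pow_card_sub_X_natDegree_eq F h.one_lt
  have := Polynomial.card_roots' (Polynomial.X ^ q - Polynomial.X : Polynomial F)
  rw [hd] at this
  refine le_trans ?_ ((Multiset.toFinset_card_le _).trans this)
  rw [← SetLike.coe_sort_coe, Nat.card_coe_set_eq, ← Set.ncard_coe_finset]
  apply Set.ncard_le_ncard _ (Finset.finite_toSet _)
  intro x hx
  have hx : h.T x = 0 := hx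
  rw [h.mem_ker] at hx
  simp [Polynomial.mem_roots hne, hx]

theorem card_range_mul (h : Hyp F q) : Nat.card h.T.range * Nat.card h.T.ker = q ^ 2 := by
  rw [← h.card, AddSubgroup.card_eq_card_quotient_mul_card_addSubgroup h.T.ker,
    Nat.card_congr (QuotientAddGroup.quotientKerEquivRange h.T).toEquiv]

theorem range_le (h : Hyp F q) : h.T.range ≤ h.T.ker := by
  rintro _ ⟨x, rfl⟩
  exact h.T_T x

theorem card_range_le (h : Hyp F q) : Nat.card h.T.range ≤ Nat.card h.T.ker :=
  AddSubgroup.card_le_of_le h.range_le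

theorem card_ker (h : Hyp F q) : Nat.card h.T.ker = q := by
  have h1 := h.card_ker_le
  have h2 := h.card_range_le
  have h3 := h.card_range_mul
  nlinarith

/-- the quadratic form -/
def Q (h : Hyp F q) (α β s : F) : F := h.T (α * s ^ 2 + β * s ^ (q + 1))

theorem Q_add (h : Hyp F q) (α β s u : F) :
    h.Q α β (s + u) = h.Q α β s + h.Q α β u + h.T ((β ^ q + β) * u ^ q * s) := by
  simp only [Q, T_apply, pow_succ, h.add, mul_pow, h.inv, pow_zero, one_mul]
  have a := h.two (α * s * u)
  have b := h.two (α ^ q * s ^ q * u ^ q)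
  linear_combination a + b - h.two (β * u ^ q * s) - h.two (β ^ q * s * u ^ q) + 
   h.two (β * u ^ q * s) + h.two (β ^ q * s * u ^ q)

theorem Q_smul (h : Hyp F q) (α β s l : F) (hl : l ^ q = l) :
    h.Q α β (l * s) = l ^ 2 * h.Q α β s := by
  simp only [Q, T_apply, pow_succ, h.add, mul_pow, h.inv, pow_zero, one_mul, hl]
  ring

theorem card_fib (h : Hyp F q) (α β : F) (b : F) (hb : h.T b = 0) (hb0 : b ≠ 0) :
    Nat.card {s // h.Q α β s = b} = Nat.card {s // h.Q α β s = 1} := by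
  obtain ⟨l, rfl⟩ := h.sqrt b
  have hl : l ^ q = l := by
    apply h.sqinj
    rw [h.mem_ker] at hb
    rw [← hb]; ring
  have hl0 : l ≠ 0 := by rintro rfl; simp at hb0
  symm
  refine Nat.card_congr (Equiv.subtypeEquiv (Equiv.mulLeft₀ l hl0) fun s => ?_)
  change _ ↔ h.Q α β (l * s) = _
  rw [h.Q_smul α β s l hl]
  rw [mul_eq_left₀ hb0]

theorem card_fib0 (h : Hyp F q) (α β : F) :
    Nat.card {s // h.Q α β s = 0} ≡ Nat.card {s // h.Q α β s = 1} [MOD q] := by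
  classical
  have e : F ≃ Σ b : h.T.ker, {s // h.Q α β s = b} :=
    ⟨fun s => ⟨⟨h.Q α β s, h.T_T _⟩, ⟨s, rfl⟩⟩, fun x => x.2.1, fun s => rfl, by
      rintro ⟨⟨b, hb⟩, ⟨s, hs⟩⟩
      simp only at hs
      subst hs; rfl⟩
  have := Nat.card_congr e
  rw [h.card, Nat.card_sigma, ← Finset.add_sum_erase _ _ (Finset.mem_univ (0 : h.T.ker)),
    Finset.sum_congr rfl (g := fun _ => Nat.card {s // h.Q α β s = 1}),
    Finset.sum_const, Finset.card_erase_of_mem (Finset.mem_univ _), Finset.card_univ,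
    ← Nat.card_eq_fintype_card, h.card_ker] at this
  · have h1 := h.one_lt
    simp only [ZeroMemClass.coe_zero, smul_eq_mul] at this
    generalize Nat.card {s // h.Q α β s = 0} = a at *
    generalize Nat.card {s // h.Q α β s = 1} = b at *
    rw [Nat.modEq_iff_dvd]
    obtain ⟨k, rfl⟩ : ∃ k, q = k + 1 := ⟨q - 1, by omega⟩
    simp only [Nat.add_sub_cancel] at this
    zify at this
    refine ⟨b - (k + 1), ?_⟩
    push_cast
    linear_combination this
  · rintro ⟨b, hb⟩ hb'
    refine h.card_fib α β b hb ?_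
    rintro rfl
    simp at hb'

theorem card_g (h : Hyp F q) (α β m : F) (hβ : β ^ q ≠ β) (a : F) (ha : h.T a = 0) :
    Nat.card {s // h.T (α * s ^ 2 + β * s ^ (q + 1) + m * s) = a} ≡
      Nat.card {s // h.Q α β s = 1} [MOD q] := by
  have hd : β ^ q + β ≠ 0 := fun e => hβ (h.eq_of_add.1 e)
  obtain ⟨u, hu⟩ : ∃ u : F, (β ^ q + β) * u ^ q = m :=
    ⟨(m / (β ^ q + β)) ^ q, by rw [h.inv]; field_simp⟩
  have key : Nat.card {s // h.T (α * s ^ 2 + β * s ^ (q + 1) + m * s) = a} =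
      Nat.card {s // h.Q α β s = a + h.Q α β u} := by
    refine Nat.card_congr (Equiv.subtypeEquiv (Equiv.addRight u) fun s => ?_)
    simp only [Equiv.coe_addRight, h.Q_add, hu]
    rw [map_add]
    change h.Q α β s + _ = a ↔ _
    constructor
    · rintro rfl; ring
    · intro e
      linear_combination e
  rw [key]
  by_cases h0 : a + h.Q α β u = 0
  · rw [h0]; exact h.card_fib0 α β
  · rw [h.card_fib α β _ _ h0]
    rw [map_add, ha, Q, h.T_T, add_zero]

end Hyp

/-- inner sum -/
def hh {F : Type} [Field F] (q r : ℕ) (α β : F) (x : Fin (r + 1) → F) : F :=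
  ∑ i : Fin (r + 1), if 1 ≤ i.1 ∧ i.1 < r then α * x i ^ 2 + β * x i ^ (q + 1) else 0

namespace Hyp
variable {F : Type} [Field F] [Fintype F] {q : ℕ}

theorem sum_pow (h : Hyp F q) {ι : Type} (s : Finset ι) (g : ι → F) :
    (∑ i ∈ s, g i) ^ q = ∑ i ∈ s, g i ^ q := by
  have hq : q ≠ 0 := by have := h.one_lt; omega
  let φ : F →+ F := ⟨⟨fun x => x ^ q, by simp [hq]⟩, h.add⟩
  exact map_sum φ g s

theorem affEq_iff (h : Hyp F q) (r : ℕ) (α β : F) (x : Fin (r + 1) → F) :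
    affEq q r α β x ↔ h.T (x (Fin.last r) + hh q r α β x) = 0 := by
  have hq : q ≠ 0 := by have := h.one_lt; omega
  have e1 : (∑ i : Fin (r + 1), if 1 ≤ i.1 ∧ i.1 < r then x i ^ (2 * q) else 0) =
      (∑ i : Fin (r + 1), if 1 ≤ i.1 ∧ i.1 < r then x i ^ 2 else 0) ^ q := by
    rw [h.sum_pow]
    refine Finset.sum_congr rfl fun i _ => ?_
    split_ifs
    · rw [pow_mul]
    · simp [hq]
  have e2 : (∑ i : Fin (r + 1), if 1 ≤ i.1 ∧ i.1 < r then x i ^ (q + 1) else 0) ^ q =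
      (∑ i : Fin (r + 1), if 1 ≤ i.1 ∧ i.1 < r then x i ^ (q + 1) else 0) := by
    rw [h.sum_pow]
    refine Finset.sum_congr rfl fun i _ => ?_
    split_ifs
    · rw [pow_succ, mul_pow, h.inv, mul_comm]
    · simp [hq]
  have e3 : hh q r α β x =
      α * (∑ i : Fin (r + 1), if 1 ≤ i.1 ∧ i.1 < r then x i ^ 2 else 0) +
      β * (∑ i : Fin (r + 1), if 1 ≤ i.1 ∧ i.1 < r then x i ^ (q + 1) else 0) := by
    rw [Finset.mul_sum, Finset.mul_sum, ← Finset.sum_add_distrib, hh]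
    refine Finset.sum_congr rfl fun i _ => ?_
    split_ifs <;> simp
  rw [affEq, e1, e3, T_apply]
  generalize (∑ i : Fin (r + 1), if 1 ≤ i.1 ∧ i.1 < r then x i ^ 2 else 0) = S at *
  generalize (∑ i : Fin (r + 1), if 1 ≤ i.1 ∧ i.1 < r then x i ^ (q + 1) else 0) = N at *
  rw [h.add, h.add, mul_pow, mul_pow, e2]
  have t1 := h.two (x (Fin.last r))
  have t2 := h.two (α * S)
  have t3 := h.two (β ^ q * N)
  constructor
  · intro e
    linear_combination e + t1 + t2 + t3
  · intro e
    linear_combination e - t1 - t2 - t3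

end Hyp

section
variable {F : Type} [Field F]

theorem hh_add_last (q r : ℕ) (α β : F) (x : Fin (r + 1) → F) (t : F) :
    hh q r α β (x + Pi.single (Fin.last r) t) = hh q r α β x := by
  refine Finset.sum_congr rfl fun i _ => ?_
  split_ifs with hi
  · have : i ≠ Fin.last r := by rintro rfl; simp at hi
    simp [this]
  · rfl

theorem hh_add_one (q r : ℕ) (α β : F) (x : Fin (r + 1) → F) (t : F) (j : Fin (r + 1))
    (h1 : 1 ≤ j.1) (h2 : j.1 < r) (hx : x j = 0) :
    hh q r α β (x + Pi.single j t) = hh q r α β x + (α * t ^ 2 + β * t ^ (q + 1)) := by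
  classical
  unfold hh
  rw [← Finset.add_sum_erase _ _ (Finset.mem_univ j),
    ← Finset.add_sum_erase (a := j) _ (fun i : Fin (r + 1) => if 1 ≤ i.1 ∧ i.1 < r then α * x i ^ 2 + β * x i ^ (q + 1) else 0)
      (Finset.mem_univ j)]
  simp only [h1, h2, hx]
  rw [Finset.sum_congr rfl (g := fun i : Fin (r + 1) => if 1 ≤ i.1 ∧ i.1 < r then α * x i ^ 2 + β * x i ^ (q + 1) else 0)]
  · simp [hx]; ring
  · intro i hi
    have : i ≠ j := Finset.ne_of_mem_erase hi
    simp [this]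

theorem dual_add_single (r : ℕ) (f : Module.Dual F (Fin (r + 1) → F)) (x : Fin (r + 1) → F)
    (j : Fin (r + 1)) (t : F) :
    f (x + Pi.single j t) = f x + t * f (Pi.single j 1) := by
  rw [map_add, show (Pi.single j t : Fin (r + 1) → F) = t • Pi.single j 1 by
    rw [← Pi.single_smul]; simp]
  simp
end

namespace Hyp
variable {F : Type} [Field F] [Fintype F] {q : ℕ}

theorem card_case1 (h : Hyp F q) (r : ℕ) (hr : 3 ≤ r) (α β : F)
    (f : Module.Dual F (Fin (r + 1) → F)) (hf : f (Pi.single (Fin.last r) 1) = 0) :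
    Nat.card {x // x 0 = 1 ∧ affEq q r α β x ∧ f x = 0} =
      q * Nat.card {y : Fin (r + 1) → F // y 0 = 1 ∧ y (Fin.last r) = 0 ∧ f y = 0} := by
  have h0 : (0 : Fin (r + 1)) ≠ Fin.last r := by
    intro e; have := congrArg Fin.val e; simp at this; omega
  conv_rhs => rw [← h.card_ker, ← Nat.card_prod]
  refine Nat.card_congr
    ⟨fun x => (⟨x.1 (Fin.last r) + hh q r α β x.1, ?_⟩,
        ⟨x.1 + Pi.single (Fin.last r) (- x.1 (Fin.last r)), ?_, ?_, ?_⟩),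
      fun p => ⟨p.2.1 + Pi.single (Fin.last r) (p.1.1 - hh q r α β p.2.1), ?_, ?_, ?_⟩,
      ?_, ?_⟩
  · exact (h.affEq_iff r α β _).1 x.2.2.1
  · simp [h0, x.2.1]
  · simp
  · rw [dual_add_single, hf, x.2.2.2]; simp
  · simp [h0, p.2.2.1]
  · rw [h.affEq_iff, hh_add_last]
    simp only [Pi.add_apply, Pi.single_eq_same, p.2.2.2.1]
    have : h.T p.1.1 = 0 := p.1.2
    simpa using this
  · rw [dual_add_single, hf, p.2.2.2.2]; simp
  · rintro ⟨x, hx⟩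
    simp only [Subtype.mk.injEq, hh_add_last]
    rw [add_assoc, ← Pi.single_add]
    simp
  · rintro ⟨⟨k, hk⟩, ⟨y, hy⟩⟩
    simp only [Prod.mk.injEq, Subtype.mk.injEq, hh_add_last]
    refine ⟨by simp [hy.2.1], ?_⟩
    rw [add_assoc, ← Pi.single_add]
    simp [hy.2.1]

theorem dvd_case2 (h : Hyp F q) (r : ℕ) (hr : 3 ≤ r) (α β : F) (hβ : β ^ q ≠ β)
    (f : Module.Dual F (Fin (r + 1) → F)) (hf : f (Pi.single (Fin.last r) 1) ≠ 0) :
    q ∣ Nat.card {x // x 0 = 1 ∧ affEq q r α β x ∧ f x = 0} := by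
  classical
  obtain ⟨j, hj⟩ : ∃ j : Fin (r + 1), j.1 = 1 := ⟨⟨1, by omega⟩, rfl⟩
  have h0 : (0 : Fin (r + 1)) ≠ Fin.last r := by
    intro e; have := congrArg Fin.val e; simp at this; omega
  have h0j : (0 : Fin (r + 1)) ≠ j := by
    intro e; have := congrArg Fin.val e; simp at this; omega
  have hjr : j ≠ Fin.last r := by
    intro e; have := congrArg Fin.val e; simp at this; omega
  set fr := f (Pi.single (Fin.last r) 1) with hfr
  set m := - f (Pi.single j 1) / fr with hm
  let Y := {y : Fin (r + 1) → F // y 0 = 1 ∧ y j = 0 ∧ y (Fin.last r) = 0}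
  have key : ∀ y : Fin (r + 1) → F, y j = 0 → y (Fin.last r) = 0 → ∀ s t : F,
      ((affEq q r α β (y + Pi.single j s + Pi.single (Fin.last r) t) ∧
        f (y + Pi.single j s + Pi.single (Fin.last r) t) = 0) ↔
      (h.T (α * s ^ 2 + β * s ^ (q + 1) + m * s) = h.T (- hh q r α β y + f y / fr) ∧
        t = - (f y + s * f (Pi.single j 1)) / fr)) := by
    intro y hy1 hy2 s t
    rw [h.affEq_iff, hh_add_last, hh_add_one q r α β y s j (by omega) (by omega) hy1,
      dual_add_single, dual_add_single, ← hfr]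
    have e : f y + s * f (Pi.single j 1) + t * fr = 0 ↔
        t = - (f y + s * f (Pi.single j 1)) / fr := by
      rw [eq_div_iff hf]
      constructor
      · intro e; linear_combination e
      · intro e; linear_combination e
    rw [e]
    refine and_congr_left fun ht => ?_
    have : (y + Pi.single j s + Pi.single (Fin.last r) t : Fin (r + 1) → F) (Fin.last r) = t := by
      simp [hy2, hjr.symm]
    rw [this, ← sub_eq_zero (b := h.T (- hh q r α β y + f y / fr)), ← map_sub]
    have e2 : t + (hh q r α β y + (α * s ^ 2 + β * s ^ (q + 1))) =
      α * s ^ 2 + β * s ^ (q + 1) + m * s - (- hh q r α β y + f y / fr) := by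
      rw [ht, hm]; field_simp; ring
    rw [e2]
  let E : {x // x 0 = 1 ∧ affEq q r α β x ∧ f x = 0} ≃
      {p : Y × F // h.T (α * p.2 ^ 2 + β * p.2 ^ (q + 1) + m * p.2) =
        h.T (- hh q r α β p.1.1 + f p.1.1 / fr)} := by
    have hdec : ∀ x : Fin (r + 1) → F,
      x - Pi.single j (x j) - Pi.single (Fin.last r) (x (Fin.last r)) + Pi.single j (x j)
        + Pi.single (Fin.last r) (x (Fin.last r)) = x := fun x => by abel
    have hj1 : ∀ x : Fin (r + 1) → F,
      (x - Pi.single j (x j) - Pi.single (Fin.last r) (x (Fin.last r)) : Fin (r + 1) → F) j = 0 := fun x => by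
        simp [hjr]
    have hr1 : ∀ x : Fin (r + 1) → F,
      (x - Pi.single j (x j) - Pi.single (Fin.last r) (x (Fin.last r)) : Fin (r + 1) → F) (Fin.last r) = 0 :=
        fun x => by simp [hjr.symm]
    have hkey : ∀ x : Fin (r + 1) → F, affEq q r α β x ∧ f x = 0 → _ := fun x hx =>
      (key _ (hj1 x) (hr1 x) (x j) (x (Fin.last r))).1 (by rw [hdec]; exact hx)
    refine
    ⟨fun x => ⟨(⟨x.1 - Pi.single j (x.1 j) - Pi.single (Fin.last r) (x.1 (Fin.last r)),
        ?_, hj1 _, hr1 _⟩, x.1 j), ?_⟩,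
      fun p => ⟨p.1.1.1 + Pi.single j p.1.2 + Pi.single (Fin.last r)
        (- (f p.1.1.1 + p.1.2 * f (Pi.single j 1)) / fr), ?_, ?_⟩, ?_, ?_⟩
    · simp [h0, h0j, x.2.1]
    · exact (hkey x.1 x.2.2).1
    · simp [h0, h0j, p.1.1.2.1]
    · exact (key _ p.1.1.2.2.1 p.1.1.2.2.2 _ _).2 ⟨p.2, rfl⟩
    · rintro ⟨x, hx⟩
      simp only [Subtype.mk.injEq]
      rw [← (hkey x hx.2).2, hdec]
    · rintro ⟨⟨⟨y, hy⟩, s⟩, hp⟩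
      simp only [Subtype.mk.injEq, Prod.mk.injEq]
      have : (y + Pi.single j s + Pi.single (Fin.last r)
        (- (f y + s * f (Pi.single j 1)) / fr) : Fin (r + 1) → F) j = s := by simp [hjr, hy.2.1]
      refine ⟨Subtype.ext ?_, this⟩
      change y + Pi.single j s + Pi.single (Fin.last r) (- (f y + s * f (Pi.single j 1)) / fr) -
        Pi.single j _ - Pi.single (Fin.last r) _ = y
      rw [this]
      have : (y + Pi.single j s + Pi.single (Fin.last r)
        (- (f y + s * f (Pi.single j 1)) / fr) : Fin (r + 1) → F) (Fin.last r) =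
          - (f y + s * f (Pi.single j 1)) / fr := by simp [hjr.symm, hy.2.2]
      rw [this]
      abel
  rw [Nat.card_congr E, Nat.card_congr (Equiv.subtypeProdEquivSigmaSubtype
    (fun (y : Y) (s : F) => h.T (α * s ^ 2 + β * s ^ (q + 1) + m * s) =
        h.T (- hh q r α β y.1 + f y.1 / fr))), Nat.card_sigma]
  have hY : q ∣ Nat.card Y := by
    obtain ⟨l, hl⟩ : ∃ l : Fin (r + 1), l.1 = 2 := ⟨⟨2, by omega⟩, rfl⟩
    have : Nat.card Y = (Fintype.piFinset (fun i : Fin (r + 1) =>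
        if i = 0 then ({1} : Finset F) else if i = j then {0} else
          if i = Fin.last r then {0} else Finset.univ)).card := by
      refine Nat.subtype_card _ fun y => ?_
      rw [Fintype.mem_piFinset]
      constructor
      · intro hy
        have b1 := hy 0
        have b2 := hy j
        have b3 := hy (Fin.last r)
        simp [h0, h0j, h0.symm, h0j.symm, hjr, hjr.symm] at b1 b2 b3
        exact ⟨b1, b2, b3⟩
      · rintro ⟨b1, b2, b3⟩ i
        split_ifs with c1 c2 c3
        · subst c1; simpa using b1
        · subst c2; simpa using b2
        · subst c3; simpa using b3
        · simp
    rw [this, Fintype.card_piFinset]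
    refine dvd_trans ?_ (Finset.dvd_prod_of_mem _ (Finset.mem_univ l))
    have a1 : l ≠ 0 := by intro e; rw [e] at hl; simp at hl
    have a2 : l ≠ j := by intro e; have := congrArg Fin.val e; omega
    have a3 : l ≠ Fin.last r := by intro e; have := congrArg Fin.val e; rw [Fin.val_last] at this; omega
    simp only [a1, a2, a3, if_false, Finset.card_univ]
    rw [← Nat.card_eq_fintype_card, h.card]
    exact dvd_pow_self _ two_ne_zero
  rw [← Nat.modEq_zero_iff_dvd]
  calc _ ≡ ∑ y : Y, Nat.card {s // h.Q α β s = 1} [MOD q] := by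
        rw [← Nat.cast_id (∑ y : Y, Nat.card {s // h.Q α β s = 1})]
        exact Nat.ModEq.sum fun y _ => h.card_g α β m hβ _ (h.T_T _)
    _ ≡ 0 [MOD q] := by
        rw [Finset.sum_const, Finset.card_univ, ← Nat.card_eq_fintype_card, smul_eq_mul,
          Nat.modEq_zero_iff_dvd]
        exact hY.mul_right _
end Hyp

section
variable {F : Type} [Field F]

/-- the sum functional -/
def sig (F : Type) [Field F] (r : ℕ) : Module.Dual F (Fin (r + 1) → F) where
  toFun x := ∑ i : Fin (r + 1), if 1 ≤ i.1 ∧ i.1 < r then x i else 0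
  map_add' x y := by
    rw [← Finset.sum_add_distrib]
    refine Finset.sum_congr rfl fun i _ => ?_
    split_ifs <;> simp
  map_smul' a x := by
    rw [RingHom.id_apply, smul_eq_mul, Finset.mul_sum]
    refine Finset.sum_congr rfl fun i _ => ?_
    split_ifs <;> simp

/-- the two functionals cutting out the part at infinity -/
def pr (F : Type) [Field F] (r : ℕ) : (Fin (r + 1) → F) →ₗ[F] F × F :=
  (LinearMap.proj 0).prod (sig F r)

/-- points at infinity -/
def WW (r : ℕ) (f : Module.Dual F (Fin (r + 1) → F)) : Submodule F (Fin (r + 1) → F) :=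
  LinearMap.ker ((pr F r).prod f)

theorem mem_WW (r : ℕ) (f : Module.Dual F (Fin (r + 1) → F)) (x : Fin (r + 1) → F) :
    x ∈ WW r f ↔ x 0 = 0 ∧ sig F r x = 0 ∧ f x = 0 := by
  simp [WW, pr, and_assoc]

theorem finrank_WW_pos (r : ℕ) (hr : 3 ≤ r) (f : Module.Dual F (Fin (r + 1) → F)) :
    0 < Module.finrank F (WW r f) := by
  have h1 := LinearMap.finrank_range_add_finrank_ker ((pr F r).prod f)
  have h2 := Submodule.finrank_le (LinearMap.range ((pr F r).prod f))
  simp only [Module.finrank_prod, Module.finrank_self, Module.finrank_fin_fun] at h1 h2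
  unfold WW
  omega

theorem finrank_WW_zero (r : ℕ) (hr : 3 ≤ r) :
    Module.finrank F (WW r (0 : Module.Dual F (Fin (r + 1) → F))) = r - 1 := by
  have h1 := LinearMap.finrank_range_add_finrank_ker (pr F r)
  have h2 : LinearMap.range (pr F r) = ⊤ := by
    rw [LinearMap.range_eq_top]
    rintro ⟨a, b⟩
    obtain ⟨j, hj⟩ : ∃ j : Fin (r + 1), j.1 = 1 := ⟨⟨1, by omega⟩, rfl⟩
    have h0j : (0 : Fin (r + 1)) ≠ j := by
      intro e; have := congrArg Fin.val e; simp at this; omega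
    refine ⟨Pi.single 0 a + Pi.single j b, ?_⟩
    have : sig F r (Pi.single 0 a + Pi.single j b) = b := by
      change (∑ i : Fin (r + 1), if 1 ≤ i.1 ∧ i.1 < r then
        (Pi.single 0 a + Pi.single j b : Fin (r + 1) → F) i else 0) = b
      rw [Finset.sum_eq_single j]
      · have : j.1 < r := by omega
        simp [hj, h0j.symm, this]
        omega
      · intro i _ hi
        split_ifs with hc
        · have : i ≠ 0 := by rintro rfl; simp at hc
          simp [hi, this]
        · rfl
      · simp
    refine Prod.ext ?_ this
    simp [pr, h0j]
  rw [h2, finrank_top, Module.finrank_prod, Module.finrank_self, Module.finrank_fin_fun] at h1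
  have h3 : WW r (0 : Module.Dual F (Fin (r + 1) → F)) = LinearMap.ker (pr F r) := by
    ext x; rw [mem_WW]; simp [pr]
  rw [h3]; omega

theorem card_split [Fintype F] (q r : ℕ) (α β : F) (f : Module.Dual F (Fin (r + 1) → F)) :
    Nat.card ↥(BsetE F q r α β ∩ {P | f P.rep = 0}) =
      Nat.card {x // x 0 = 1 ∧ affEq q r α β x ∧ f x = 0} +
      Nat.card (Projectivization F (WW r f)) := by
  have hfin : Finite (Projectivization F (Fin (r + 1) → F)) :=
    (Projectivization.finite_iff_of_finite F _).2 inferInstance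
  set S1 : Set (Projectivization F (Fin (r + 1) → F)) :=
    {P | P.rep 0 ≠ 0 ∧ affEq q r α β (fun i => P.rep i / P.rep 0) ∧ f P.rep = 0} with hS1
  set S2 : Set (Projectivization F (Fin (r + 1) → F)) := {P | P.rep ∈ WW r f} with hS2
  have hU : BsetE F q r α β ∩ {P | f P.rep = 0} = S1 ∪ S2 := by
    ext P
    simp only [BsetE, hS1, hS2, Set.mem_inter_iff, Set.mem_ofPred_eq, Set.mem_union, mem_WW]
    change (_ ∨ (_ ∧ sig F r P.rep = 0)) ∧ _ ↔ _
    tauto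
  have hD : Disjoint S1 S2 := by
    rw [Set.disjoint_left]
    intro P h1 h2
    exact h1.1 ((mem_WW r f _).1 h2).1
  have c1 : Nat.card S1 = Nat.card {x // x 0 = 1 ∧ affEq q r α β x ∧ f x = 0} := by
    have hne : ∀ x : Fin (r + 1) → F, x 0 = 1 → x ≠ 0 := by
      rintro _ hx rfl; simp at hx
    have hrep : ∀ (x : Fin (r + 1) → F) (hx : x 0 = 1),
        (Projectivization.mk F x (hne x hx)).rep 0 ≠ 0 ∧
        (fun i => (Projectivization.mk F x (hne x hx)).rep i /
          (Projectivization.mk F x (hne x hx)).rep 0) = x ∧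
        (f x = 0 → f (Projectivization.mk F x (hne x hx)).rep = 0) := by
      intro x hx
      obtain ⟨a, ha⟩ := Projectivization.exists_smul_eq_mk_rep F x (hne x hx)
      rw [← ha]
      refine ⟨?_, ?_, ?_⟩
      · simp [Units.smul_def, hx]
      · funext i
        simp [Units.smul_def, hx]
      · intro hf
        rw [Units.smul_def, map_smul, hf, smul_zero]
    refine Nat.card_congr ⟨fun P => ⟨fun i => P.1.rep i / P.1.rep 0, ?_, P.2.2.1, ?_⟩,
      fun x => ⟨Projectivization.mk F x.1 (hne x.1 x.2.1), ?_⟩, ?_, ?_⟩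
    · exact div_self P.2.1
    · have : (fun i => P.1.rep i / P.1.rep 0) = (P.1.rep 0)⁻¹ • P.1.rep := by
        funext i; simp [div_eq_inv_mul]
      rw [this, map_smul, P.2.2.2, smul_zero]
    · obtain ⟨e1, e2, e3⟩ := hrep x.1 x.2.1
      refine ⟨e1, ?_, e3 x.2.2.2⟩
      rw [e2]; exact x.2.2.1
    · rintro ⟨P, hP⟩
      simp only [Subtype.mk.injEq]
      conv_rhs => rw [← P.mk_rep]
      rw [Projectivization.mk_eq_mk_iff']
      refine ⟨(P.rep 0)⁻¹, ?_⟩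
      funext i; simp [div_eq_inv_mul]
    · rintro ⟨x, hx⟩
      simp only [Subtype.mk.injEq]
      exact (hrep x hx.1).2.1
  have c2 : Nat.card S2 = Nat.card (Projectivization F (WW r f)) := by
    have hinj := Projectivization.map_injective (WW r f).subtype (WW r f).injective_subtype
    rw [← Nat.card_range_of_injective hinj]
    congr 2
    ext P
    constructor
    · intro hP
      refine ⟨Projectivization.mk F ⟨P.rep, hP⟩ ?_, ?_⟩
      · intro e
        exact P.rep_nonzero (congrArg Subtype.val e)
      · rw [Projectivization.map_mk]
        exact P.mk_rep
    · rintro ⟨R, rfl⟩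
      induction R using Projectivization.ind with
      | h v hv =>
        rw [Projectivization.map_mk]
        change Projectivization.rep _ ∈ WW r f
        obtain ⟨a, ha⟩ := Projectivization.exists_smul_eq_mk_rep F (v : Fin (r + 1) → F)
          (by simpa using hv)
        change (Projectivization.mk F (v : Fin (r + 1) → F) _).rep ∈ WW r f
        rw [← ha, Units.smul_def]
        exact (WW r f).smul_mem _ v.2
  rw [hU, ← c1, ← c2, Nat.card_coe_set_eq, Nat.card_coe_set_eq, Nat.card_coe_set_eq,
    Set.ncard_union_eq hD]
end

namespace Hyp
variable {F : Type} [Field F] [Fintype F] {q : ℕ}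

theorem card_inf (h : Hyp F q) (r : ℕ) (hr : 3 ≤ r) (f : Module.Dual F (Fin (r + 1) → F)) :
    Nat.card (Projectivization F (WW r f)) ≡ 1 [MOD q] := by
  rw [Projectivization.card_of_finrank F (WW r f) rfl]
  obtain ⟨n, hn⟩ : ∃ n, Module.finrank F (WW r f) = n + 1 :=
    ⟨_, (Nat.succ_pred_eq_of_pos (finrank_WW_pos r hr f)).symm⟩
  rw [hn, Finset.sum_range_succ']
  have : ∑ i ∈ Finset.range n, Nat.card F ^ (i + 1) ≡ 0 [MOD q] := by
    rw [Nat.modEq_zero_iff_dvd]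
    refine Finset.dvd_sum fun i _ => ?_
    rw [h.card]
    exact (dvd_pow_self q two_ne_zero).trans (dvd_pow_self _ (Nat.succ_ne_zero i))
  simpa using this.add_right 1

theorem card_mod (h : Hyp F q) (r : ℕ) (hr : 3 ≤ r) (α β : F) (hβ : β ^ q ≠ β)
    (f : Module.Dual F (Fin (r + 1) → F)) :
    Nat.card ↥(BsetE F q r α β ∩ {P | f P.rep = 0}) ≡ 1 [MOD q] := by
  rw [card_split]
  have : q ∣ Nat.card {x // x 0 = 1 ∧ affEq q r α β x ∧ f x = 0} := by
    by_cases hf : f (Pi.single (Fin.last r) 1) = 0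
    · rw [h.card_case1 r hr α β f hf]; exact dvd_mul_right _ _
    · exact h.dvd_case2 r hr α β hβ f hf
  simpa using ((Nat.modEq_zero_iff_dvd).2 this).add (h.card_inf r hr f)

theorem inter_zero (r : ℕ) (α β : F) : BsetE F q r α β =
    BsetE F q r α β ∩ {P | (0 : Module.Dual F (Fin (r + 1) → F)) P.rep = 0} := by
  simp

theorem card_B (h : Hyp F q) (r : ℕ) (hr : 3 ≤ r) (α β : F) :
    Nat.card ↥(BsetE F q r α β) =
      q ^ (2 * r - 1) + ∑ i ∈ Finset.range (r - 1), q ^ (2 * i) := by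
  classical
  rw [inter_zero, card_split, h.card_case1 r hr α β 0 rfl,
    Projectivization.card_of_finrank F _ (finrank_WW_zero r hr), h.card]
  simp only [← pow_mul]
  congr 1
  obtain ⟨n, rfl⟩ : ∃ n, r = n + 1 := ⟨r - 1, by omega⟩
  have h0 : (0 : Fin (n + 1 + 1)) ≠ Fin.last (n + 1) := by
    intro e; have := congrArg Fin.val e; simp at this
  have : Nat.card {y : Fin (n + 1 + 1) → F // y 0 = 1 ∧ y (Fin.last (n + 1)) = 0 ∧
      (0 : Module.Dual F (Fin (n + 1 + 1) → F)) y = 0} =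
      (Fintype.piFinset (fun i : Fin (n + 1 + 1) =>
        if i = 0 then ({1} : Finset F) else
          if i = Fin.last (n + 1) then {0} else Finset.univ)).card := by
    refine Nat.subtype_card _ fun y => ?_
    rw [Fintype.mem_piFinset]
    constructor
    · intro hy
      have b1 := hy 0
      have b3 := hy (Fin.last (n + 1))
      simp [h0.symm] at b1 b3
      exact ⟨b1, b3, rfl⟩
    · rintro ⟨b1, b3, -⟩ i
      split_ifs with c1 c3
      · subst c1; simpa using b1
      · subst c3; simpa using b3
      · simp
  rw [this, Fintype.card_piFinset, Fin.prod_univ_succ, Fin.prod_univ_castSucc]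
  have e : ∀ i : Fin n, (Fin.castSucc i).succ ≠ Fin.last (n + 1) := by
    intro i e; have := congrArg Fin.val e; simp at this; omega
  simp only [Fin.succ_ne_zero, e, if_false, Fin.succ_last, if_true, Finset.card_singleton,
    Finset.card_univ, ← Nat.card_eq_fintype_card, h.card, Finset.prod_const, one_mul, mul_one]
  simp only [Nat.card_eq_fintype_card, Fintype.card_fin]
  have e' : Fin.last n.succ ≠ 0 := h0.symm
  rw [if_neg e', Finset.card_singleton, mul_one, ← pow_mul, ← pow_succ']
  congr 1

theorem span_B (h : Hyp F q) (r : ℕ) (hr : 3 ≤ r) (α β : F) :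
    Submodule.span F (Projectivization.rep '' BsetE F q r α β) = ⊤ := by
  set S := Submodule.span F (Projectivization.rep '' BsetE F q r α β) with hS
  have h0 : (0 : Fin (r + 1)) ≠ Fin.last r := by
    intro e; have := congrArg Fin.val e; simp at this; omega
  have h1 : ∀ x : Fin (r + 1) → F, x 0 = 1 → affEq q r α β x → x ∈ S := by
    intro x hx ha
    have hne : x ≠ 0 := by rintro rfl; simp at hx
    obtain ⟨a, e⟩ := Projectivization.exists_smul_eq_mk_rep F x hne
    have hm : (Projectivization.mk F x hne).rep ∈ S := by
      refine Submodule.subset_span ⟨_, Or.inl ⟨?_, ?_⟩, rfl⟩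
      · rw [← e]; simp [Units.smul_def, hx]
      · rw [← e]
        convert ha using 1
        funext i
        simp [Units.smul_def, hx]
    rw [← e, Units.smul_def] at hm
    exact (S.smul_mem_iff a.ne_zero).1 hm
  have h2 : ∀ (y : Fin (r + 1) → F) (k : F), y 0 = 1 → h.T k = 0 →
      y + Pi.single (Fin.last r) (k - hh q r α β y - y (Fin.last r)) ∈ S := by
    intro y k hy hk
    apply h1
    · simp [h0, hy]
    · rw [h.affEq_iff, hh_add_last, ← hk]
      congr 1
      simp
  have h3 : (Pi.single (Fin.last r) 1 : Fin (r + 1) → F) ∈ S := by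
    have a := h2 (Pi.single 0 1) 1 (by simp) ((h.mem_ker 1).2 (one_pow q))
    have b := h2 (Pi.single 0 1) 0 (by simp) (map_zero _)
    have := S.sub_mem a b
    rw [add_sub_add_left_eq_sub, ← Pi.single_sub] at this
    convert this using 1
    congr 1
    ring
  have h4 : ∀ y : Fin (r + 1) → F, y 0 = 1 → y ∈ S := by
    intro y hy
    have a := h2 y 0 hy (map_zero _)
    have b := S.smul_mem (0 - hh q r α β y - y (Fin.last r)) h3
    rw [← Pi.single_smul, smul_eq_mul, mul_one] at b
    simpa using S.sub_mem a b
  rw [eq_top_iff]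
  intro x _
  have a := h4 (x + Pi.single 0 (1 - x 0)) (by simp)
  have b := S.smul_mem (1 - x 0) (h4 (Pi.single 0 1) (by simp))
  rw [← Pi.single_smul, smul_eq_mul, mul_one] at b
  simpa using S.sub_mem a b

end Hyp

/-- for `q > 2` even and `r ≥ 3`, the hypersurface `B` spans
`PG(r,q²)`, the projective code `C(B)` has length
`N = q^{2r−1}+q^{2(r−2)}+⋯+q²+1` and dimension `r+1`, and it is `q`-divisible. -/
theorem statement9 (q r : ℕ) (hq : IsPrimePow q) (hqeven : Even q) (hq2 : 2 < q)
    (hr : 3 ≤ r)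
    (F : Type) [Field F] [Fintype F] (hF : Fintype.card F = q ^ 2)
    (α β : F) (hα : α ≠ 0) (hβ : β ^ q ≠ β)
    (hcond : Odd r ∨ (Even r ∧ ∀ m : ℕ, q = 2 ^ m →
      ∑ i ∈ Finset.range m, (α ^ (q + 1) / (β ^ q + β) ^ 2) ^ 2 ^ i = 0)) :
    Submodule.span F (Projectivization.rep '' BsetE F q r α β) = ⊤ ∧
    Nat.card ↥(BsetE F q r α β) =
      q ^ (2 * r - 1) + ∑ i ∈ Finset.range (r - 1), q ^ (2 * i) ∧
    Module.finrank F ↥(LinearMap.range (codeMap (BsetE F q r α β))) = r + 1 ∧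
    (∀ f : Module.Dual F (Fin (r + 1) → F), f ≠ 0 →
      q ∣ Nat.card ↥(BsetE F q r α β) -
        Nat.card ↥(BsetE F q r α β ∩ {P | f P.rep = 0})) := by
  have h := Hyp.mk' q hq hqeven F hF
  have hspan := h.span_B r hr α β
  refine ⟨hspan, h.card_B r hr α β, ?_, ?_⟩
  · rw [LinearMap.finrank_range_of_inj, Subspace.dual_finrank_eq, Module.finrank_fin_fun]
    rw [← LinearMap.ker_eq_bot, LinearMap.ker_eq_bot']
    intro f hf
    apply LinearMap.ext_on hspan
    rintro _ ⟨P, hP, rfl⟩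
    exact congrFun hf ⟨P, hP⟩
  · intro f _
    have hfin : Finite (Projectivization F (Fin (r + 1) → F)) :=
      (Projectivization.finite_iff_of_finite F _).2 inferInstance
    have a := h.card_mod r hr α β hβ f
    have b := h.card_mod r hr α β hβ 0
    rw [← Hyp.inter_zero] at b
    refine (Nat.modEq_iff_dvd' ?_).1 (a.trans b.symm)
    exact Nat.card_mono (Set.toFinite _) Set.inter_subset_left
end

section
/- Let q > 2 be an even prime power, r ≥ 3, and let B be the hypersurface of PG(r,q²) defined below (with the stated conditions on α and β). Then the projective code C(B) is not a minimal code; more precisely, a nonzero codeword of C(B) is non-minimal if and only if it corresponds to a nonzero scalar multiple of the functional X₀, and these are exactly the q²−1 codewords of weight q^{2r−1}. -/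
/-- The codeword of the projective code associated to the projective system `V`
corresponding to the linear functional `f`. -/
noncomputable def cw {F W : Type*} [Field F] [AddCommGroup W] [Module F W]
    (V : Set (Projectivization F W)) (f : Module.Dual F W) : ↥V → F :=
  fun P => f P.1.rep

/-- A nonzero codeword is minimal if every nonzero codeword whose support is contained
in its support is a scalar multiple of it. -/
def IsMinimalWord {F W : Type*} [Field F] [AddCommGroup W] [Module F W]
    (V : Set (Projectivization F W)) (f : Module.Dual F W) : Prop :=
  cw V f ≠ 0 ∧ ∀ g : Module.Dual F W, cw V g ≠ 0 →
    (∀ P : ↥V, cw V g P ≠ 0 → cw V f P ≠ 0) → ∃ a : F, cw V g = a • cw V f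

/-- The projective code of `V` is a minimal code if all of its nonzero codewords
are minimal. -/
def IsMinimalCode {F W : Type*} [Field F] [AddCommGroup W] [Module F W]
    (V : Set (Projectivization F W)) : Prop :=
  ∀ f : Module.Dual F W, cw V f ≠ 0 → IsMinimalWord V f

set_option linter.unusedSectionVars false
set_option linter.unusedVariables false

namespace S10

structure Good (F : Type) [Field F] [Fintype F] (q : ℕ) : Prop where
  card : Fintype.card F = q ^ 2
  two : ∀ x : F, x + x = 0
  add : ∀ x y : F, (x + y) ^ q = x ^ q + y ^ q
  qq : ∀ x : F, (x ^ q) ^ q = x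
  gt : 2 < q
  even : Even q

theorem good_of (q : ℕ) (hq : IsPrimePow q) (hqeven : Even q) (hq2 : 2 < q)
    (F : Type) [Field F] [Fintype F] (hF : Fintype.card F = q ^ 2) : Good F q := by
  obtain ⟨p, k, hp, hk, rfl⟩ := hq
  have hp' : p.Prime := hp.nat_prime
  have hp2 : p = 2 := by
    have h2 : 2 ∣ p ^ k := hqeven.two_dvd
    have := Nat.prime_two.dvd_of_dvd_pow h2
    exact ((Nat.prime_dvd_prime_iff_eq Nat.prime_two hp').1 this).symm
  subst hp2
  have : Fact (Nat.Prime 2) := ⟨Nat.prime_two⟩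
  have : CharP F 2 := by
    refine charP_of_card_eq_prime_pow (f := k * 2) ?_
    rw [hF, pow_mul]
  refine ⟨hF, fun x => CharTwo.add_self_eq_zero x, fun x y => add_pow_char_pow x y 2 k, ?_, hq2, hqeven⟩
  intro x
  rw [← pow_mul, ← pow_two, ← hF, FiniteField.pow_card]

variable {F : Type} [Field F] [Fintype F] {q : ℕ}

theorem Good.neg (G : Good F q) (x : F) : -x = x := by
  have := G.two x
  linear_combination -this

theorem Good.qpos (G : Good F q) : 0 < q := by have := G.gt; omega

theorem Good.zero (G : Good F q) : (0 : F) ^ q = 0 := zero_pow G.qpos.ne'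

/-- trace to the subfield -/
def T (q : ℕ) (x : F) : F := x ^ q + x

theorem Good.T_add (G : Good F q) (x y : F) : T q (x + y) = T q x + T q y := by
  simp only [T, G.add]; ring

theorem Good.T_zero (G : Good F q) : T q (0 : F) = 0 := by simp [T, G.zero]

theorem Good.T_pow (G : Good F q) (x : F) : T q x ^ q = T q x := by
  simp only [T, G.add, G.qq]; ring

theorem Good.T_smul (G : Good F q) (t x : F) (ht : t ^ q = t) : T q (t * x) = t * T q x := by
  simp only [T, mul_pow, ht]; ring

open Classical in
theorem Good.card_K (G : Good F q) : (Finset.univ.filter fun c : F => c ^ q = c).card ≤ q := by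
  have hne : (Polynomial.X ^ q - Polynomial.X : Polynomial F) ≠ 0 :=
    FiniteField.X_pow_card_sub_X_ne_zero F (by have := G.gt; omega)
  calc _ ≤ (Polynomial.X ^ q - Polynomial.X : Polynomial F).roots.toFinset.card := by
        apply Finset.card_le_card
        intro c hc
        simp only [Finset.mem_filter, Finset.mem_univ, true_and] at hc
        simp [hne, hc]
    _ ≤ _ := Multiset.toFinset_card_le _
    _ ≤ _ := Polynomial.card_roots' _
    _ = q := FiniteField.X_pow_card_sub_X_natDegree_eq F (by have := G.gt; omega)

open Classical in
theorem Good.fiber_le (G : Good F q) (c : F) :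
    (Finset.univ.filter fun y : F => T q y = c).card ≤ q := by
  by_cases h : ∃ y0 : F, T q y0 = c
  · obtain ⟨y0, h0⟩ := h
    refine le_trans (Finset.card_le_card_of_injOn (fun y => y + y0) ?_ ?_) G.card_K
    · intro y hy
      simp only [Finset.coe_filter, Finset.mem_univ, true_and, Set.mem_ofPred_eq] at hy ⊢
      have h1 : T q (y + y0) = 0 := by rw [G.T_add, hy, h0, G.two]
      simp only [T] at h1
      have := G.two (y + y0)
      linear_combination h1 - this
    · intro a _ b _ hab
      simpa using hab
  · rw [Finset.filter_false_of_mem]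
    · simp
    · intro y _ hy
      exact h ⟨y, hy⟩

open Classical in
theorem Good.fiber (G : Good F q) (c : F) (hc : c ^ q = c) :
    (Finset.univ.filter fun y : F => T q y = c).card = q := by
  set K := Finset.univ.filter fun c : F => c ^ q = c with hK
  have hsum : ∑ d ∈ K, (Finset.univ.filter fun y : F => T q y = d).card = q ^ 2 := by
    rw [← Finset.card_eq_sum_card_fiberwise (s := Finset.univ) (t := K) (f := T q)]
    · rw [Finset.card_univ, G.card]
    · intro y _
      simp [hK, G.T_pow]
  by_contra hne
  have hlt : (Finset.univ.filter fun y : F => T q y = c).card < q := lt_of_le_of_ne (G.fiber_le c) hne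
  have : ∑ d ∈ K, (Finset.univ.filter fun y : F => T q y = d).card < ∑ d ∈ K, q :=
    Finset.sum_lt_sum (fun d _ => G.fiber_le d) ⟨c, by simp [hK, hc], hlt⟩
  rw [hsum, Finset.sum_const, smul_eq_mul] at this
  have h2 := G.card_K
  rw [← hK] at h2
  nlinarith

theorem Good.T_surj (G : Good F q) (c : F) (hc : c ^ q = c) : ∃ y, T q y = c := by
  classical
  have h := G.fiber c hc
  have : (Finset.univ.filter fun y : F => T q y = c).Nonempty := by
    rw [← Finset.card_pos, h]; exact G.qpos
  obtain ⟨y, hy⟩ := this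
  exact ⟨y, by simpa using hy⟩

/-- one-variable part -/
def Q1 (q : ℕ) (α δ : F) (x : F) : F := T q (α * x ^ 2) + δ * x ^ (q + 1)

def hh (q : ℕ) (α δ a : F) (x : F) : F := Q1 q α δ x + T q (a * x)

theorem Good.Q1_pow (G : Good F q) (α δ x : F) (hδ : δ ^ q = δ) : Q1 q α δ x ^ q = Q1 q α δ x := by
  simp only [Q1, G.add, G.T_pow, mul_pow, hδ, pow_succ, G.qq]; ring

theorem Good.hh_pow (G : Good F q) (α δ a x : F) (hδ : δ ^ q = δ) :
    hh q α δ a x ^ q = hh q α δ a x := by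
  simp only [hh, G.add, G.T_pow, G.Q1_pow _ _ _ hδ]

theorem Good.hh_zero (G : Good F q) (α δ a : F) : hh q α δ a 0 = 0 := by
  simp [hh, Q1, G.T_zero]

theorem Good.hh_expand (G : Good F q) (α δ a x u t : F) (ht : t ^ q = t) :
    hh q α δ a (t * x + u) = t ^ 2 * Q1 q α δ x + t * T q (a * x) + hh q α δ a u
      + t * (δ * T q (x * u ^ q)) := by
  have h2 : (2 : F) = 0 := by rw [← one_add_one_eq_two]; exact G.two 1
  have e1 : (t * x + u) ^ q = t * x ^ q + u ^ q := by rw [G.add, mul_pow, ht]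
  have e2 : (α * (t * x + u) ^ 2) ^ q = α ^ q * (t * x ^ q + u ^ q) ^ 2 := by
    rw [mul_pow, ← pow_mul, mul_comm 2 q, pow_mul, e1]
  have e3 : (a * (t * x + u)) ^ q = a ^ q * (t * x ^ q + u ^ q) := by rw [mul_pow, e1]
  have e4 (z : F) : (α * z ^ 2) ^ q = α ^ q * (z ^ q) ^ 2 := by
    rw [mul_pow, ← pow_mul, mul_comm 2 q, pow_mul]
  simp only [hh, Q1, T, e2, e3, e4, pow_succ _ q, e1, mul_pow, G.qq]
  linear_combination (α ^ q * t * x ^ q * u ^ q + α * t * x * u) * h2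

theorem Good.hh_surj (G : Good F q) (α δ a c : F) (hδ : δ ^ q = δ) (hδ0 : δ ≠ 0)
    (hc : c ^ q = c) : ∃ x, hh q α δ a x = c := by
  obtain ⟨x0, hx0, ha⟩ : ∃ x0 : F, x0 ≠ 0 ∧ T q (a * x0) = 0 := by
    by_cases h : a = 0
    · exact ⟨1, one_ne_zero, by simp [h, G.T_zero]⟩
    · exact ⟨a⁻¹, inv_ne_zero h, by rw [mul_inv_cancel₀ h]; simp [T, G.two]⟩
  by_cases hQ : Q1 q α δ x0 = 0
  · obtain ⟨w, hw⟩ := G.T_surj δ⁻¹ (by rw [inv_pow, hδ])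
    set u := (w / x0) ^ q with hu
    have hB : δ * T q (x0 * u ^ q) = 1 := by
      rw [hu, G.qq, mul_div_cancel₀ _ hx0, hw, mul_inv_cancel₀ hδ0]
    refine ⟨(c + hh q α δ a u) * x0 + u, ?_⟩
    rw [G.hh_expand _ _ _ _ _ _ (by rw [G.add, hc, G.hh_pow _ _ _ _ hδ]), hB, hQ, ha]
    have := G.two (hh q α δ a u)
    linear_combination this
  · set d := c / Q1 q α δ x0 with hd
    have hdq : d ^ q = d := by rw [hd, div_pow, hc, G.Q1_pow _ _ _ hδ]
    obtain ⟨k, hk⟩ := G.even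
    refine ⟨d ^ k * x0 + 0, ?_⟩
    rw [G.hh_expand _ _ _ _ _ _ (by rw [← pow_mul, mul_comm, pow_mul, hdq]), ha, G.hh_zero,
      G.zero, mul_zero, mul_zero, G.T_zero, ← pow_mul, mul_two, ← hk, hdq, hd]
    field_simp
    ring

theorem Good.hh_not_inj (G : Good F q) (α δ a : F) (hδ : δ ^ q = δ) :
    ∃ x x', x ≠ x' ∧ hh q α δ a x = hh q α δ a x' := by
  classical
  have := Finset.exists_ne_map_eq_of_card_lt_of_maps_to
    (s := (Finset.univ : Finset F)) (t := Finset.univ.filter fun c : F => c ^ q = c)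
    (f := hh q α δ a) ?_ ?_
  · obtain ⟨x, _, y, _, h, h'⟩ := this
    exact ⟨x, y, h, h'⟩
  · rw [Finset.card_univ, G.card]
    have := G.card_K
    have := G.gt
    nlinarith
  · intro x _
    simp [G.hh_pow _ _ _ _ hδ]

/-- counting -/
theorem Good.count (G : Good F q) (α δ : F) (hδ : δ ^ q = δ) (hδ0 : δ ≠ 0) (k : ℕ)
    (a : Fin (k + 2) → F) (c : F) (hc : c ^ q = c) :
    Fintype.card F ^ (k + 1) <
      Nat.card {x : Fin (k + 2) → F // ∑ i, hh q α δ (a i) (x i) = c} := by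
  classical
  have hsumK (z : Fin (k + 1) → F) : (c + ∑ i, hh q α δ (a i.succ) (z i)) ^ q =
      c + ∑ i, hh q α δ (a i.succ) (z i) := by
    rw [G.add, hc]
    congr 1
    have : ∀ s : Finset (Fin (k+1)), (∑ i ∈ s, hh q α δ (a i.succ) (z i)) ^ q =
       ∑ i ∈ s, hh q α δ (a i.succ) (z i) := by
      intro s
      induction s using Finset.induction_on with
      | empty => simp [G.zero]
      | insert i s hi ih => rw [Finset.sum_insert hi, G.add, ih, G.hh_pow _ _ _ _ hδ]
    exact this _
  have key (x0 : F) (z : Fin (k + 1) → F)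
      (h : hh q α δ (a 0) x0 = c + ∑ i, hh q α δ (a i.succ) (z i)) :
      ∑ i, hh q α δ (a i) ((Fin.cons x0 z : Fin (k + 2) → F) i) = c := by
    rw [Fin.sum_univ_succ]
    simp only [Fin.cons_zero, Fin.cons_succ, h]
    have := G.two (∑ i, hh q α δ (a i.succ) (z i))
    linear_combination this
  choose s hs using fun z => G.hh_surj α δ (a 0) _ hδ hδ0 (hsumK z)
  let f : (Fin (k + 1) → F) → {x : Fin (k + 2) → F // ∑ i, hh q α δ (a i) (x i) = c} :=
    fun z => ⟨Fin.cons (s z) z, key _ _ (hs z)⟩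
  have hf : Function.Injective f := by
    intro z z' h
    have := congrArg (fun v => Fin.tail v.1) h
    simpa [f] using this
  have hns : ¬ Function.Surjective f := by
    intro hsurj
    obtain ⟨x, x', hne, hxx⟩ := G.hh_not_inj α δ (a 0) hδ
    obtain ⟨y, hy⟩ := G.hh_surj α δ (a 1) (c + hh q α δ (a 0) x) hδ hδ0
      (by rw [G.add, hc, G.hh_pow _ _ _ _ hδ])
    let z : Fin (k + 1) → F := Fin.cons y 0
    have hz : c + ∑ i, hh q α δ (a i.succ) (z i) = hh q α δ (a 0) x := by
      rw [Fin.sum_univ_succ]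
      simp only [z, Fin.cons_zero, Fin.cons_succ, Pi.zero_apply, G.hh_zero,
        Finset.sum_const_zero, Fin.succ_zero_eq_one, hy]
      have := G.two c
      linear_combination this
    obtain ⟨w, hw⟩ := hsurj ⟨Fin.cons x z, key _ _ hz.symm⟩
    obtain ⟨w', hw'⟩ := hsurj ⟨Fin.cons x' z, key _ _ (by rw [hz, hxx])⟩
    have h1 := congrArg Subtype.val hw
    have h2 := congrArg Subtype.val hw'
    simp only [f, Fin.cons_inj] at h1 h2
    apply hne
    rw [← h1.1, ← h2.1, h1.2, h2.2]
  rw [Nat.card_eq_fintype_card]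
  have := Fintype.card_lt_of_injective_not_surjective f hf hns
  simpa using this


section geom

def mkv {n : ℕ} (s : F) (x : Fin n → F) (y : F) : Fin (n + 1 + 1) → F :=
  Fin.cons s (Fin.snoc x y : Fin (n + 1) → F)

theorem mkv_zero {n : ℕ} (s : F) (x : Fin n → F) (y : F) : mkv s x y 0 = s := rfl

theorem mkv_last {n : ℕ} (s : F) (x : Fin n → F) (y : F) : mkv s x y (Fin.last (n + 1)) = y := by
  rw [mkv, ← Fin.succ_last, Fin.cons_succ, Fin.snoc_last]

theorem mkv_mid {n : ℕ} (s : F) (x : Fin n → F) (y : F) (i : Fin n) :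
    mkv s x y i.castSucc.succ = x i := by
  rw [mkv, Fin.cons_succ, Fin.snoc_castSucc]

theorem exists_mkv {n : ℕ} (v : Fin (n + 1 + 1) → F) : ∃ s x y, v = mkv s x y := by
  refine ⟨v 0, Fin.init (Fin.tail v), Fin.tail v (Fin.last n), ?_⟩
  rw [mkv, Fin.snoc_init_self]
  exact (Fin.cons_self_tail v).symm

theorem mkv_ext {n : ℕ} {s s' : F} {x x' : Fin n → F} {y y' : F} (h : mkv s x y = mkv s' x' y') :
    s = s' ∧ x = x' ∧ y = y' := by
  refine ⟨?_, ?_, ?_⟩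
  · have := congrFun h 0
    simpa [mkv_zero] using this
  · funext i
    have := congrFun h i.castSucc.succ
    simpa only [mkv_mid] using this
  · have := congrFun h (Fin.last _)
    simpa only [mkv_last] using this

theorem mkv_add {n : ℕ} (s s' : F) (x x' : Fin n → F) (y y' : F) :
    mkv s x y + mkv s' x' y' = mkv (s + s') (x + x') (y + y') := by
  funext i
  refine Fin.cases ?_ (fun j => ?_) i
  · simp [mkv_zero]
  · refine Fin.lastCases ?_ (fun k => ?_) j
    · simp only [Pi.add_apply, Fin.succ_last, mkv_last]
    · simp only [Pi.add_apply, mkv_mid]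

theorem mkv_smul {n : ℕ} (c s : F) (x : Fin n → F) (y : F) :
    c • mkv s x y = mkv (c * s) (c • x) (c * y) := by
  funext i
  refine Fin.cases ?_ (fun j => ?_) i
  · simp [mkv_zero]
  · refine Fin.lastCases ?_ (fun k => ?_) j
    · simp only [Pi.smul_apply, smul_eq_mul, Fin.succ_last, mkv_last]
    · simp only [Pi.smul_apply, smul_eq_mul, mkv_mid]

theorem mid_sum {n : ℕ} (g : Fin (n + 1 + 1) → F) :
    (∑ i : Fin (n + 1 + 1), if 1 ≤ i.1 ∧ i.1 < n + 1 then g i else 0) =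
      ∑ i : Fin n, g i.castSucc.succ := by
  rw [Fin.sum_univ_succ, Fin.sum_univ_castSucc]
  simp

theorem Good.affEq_iff (G : Good F q) {n : ℕ} (α β s : F) (x : Fin n → F) (y : F) :
    affEq q (n + 1) α β (mkv s x y) ↔ T q y = ∑ i, Q1 q α (β ^ q + β) (x i) := by
  have hsum : ∀ t : Finset (Fin n), ∑ i ∈ t, Q1 q α (β ^ q + β) (x i) =
      α ^ q * ∑ i ∈ t, x i ^ (2 * q) + α * ∑ i ∈ t, x i ^ 2 +
      (β ^ q + β) * ∑ i ∈ t, x i ^ (q + 1) := by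
    intro t
    simp only [Q1, T, Finset.sum_add_distrib, mul_pow, ← pow_mul, Finset.mul_sum]
  rw [affEq, mid_sum, mid_sum, mid_sum, mkv_last]
  simp only [mkv_mid]
  rw [hsum, T]
  set A := α ^ q * ∑ i, x i ^ (2 * q)
  set B := α * ∑ i, x i ^ 2
  set D := ∑ i, x i ^ (q + 1)
  rw [sub_eq_add_neg, sub_eq_add_neg, sub_eq_add_neg, G.neg, G.neg, G.neg]
  have hA := G.two A
  have hB := G.two B
  constructor
  · intro h
    linear_combination h - hA - hB
  · intro h
    linear_combination h + hA + hB

def cone (q r : ℕ) (α β : F) (v : Fin (r + 1) → F) : Prop :=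
  (v 0 ≠ 0 ∧ affEq q r α β fun i => v i / v 0) ∨
       (v 0 = 0 ∧ (∑ i : Fin (r + 1), if 1 ≤ i.1 ∧ i.1 < r then v i else 0) = 0)

theorem Good.cone_aff (G : Good F q) {n : ℕ} (α β : F) (x : Fin n → F) (y : F) :
    cone q (n + 1) α β (mkv 1 x y) ↔ T q y = ∑ i, Q1 q α (β ^ q + β) (x i) := by
  rw [← G.affEq_iff α β 1 x y]
  simp [cone, mkv_zero]

theorem cone_inf {n : ℕ} (α β : F) (x : Fin n → F) (y : F) :
    cone q (n + 1) α β (mkv 0 x y) ↔ ∑ i, x i = 0 := by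
  simp only [cone, mkv_zero, mid_sum, mkv_mid]
  simp

theorem cone_smul {r : ℕ} (α β c : F) (hc : c ≠ 0) (v : Fin (r + 1) → F) 
    (h : cone q r α β v) : cone q r α β (c • v) := by
  rcases h with ⟨h0, h⟩ | ⟨h0, h⟩
  · left
    refine ⟨by simp [hc, h0], ?_⟩
    convert h using 2 with i
    simp only [Pi.smul_apply, smul_eq_mul]
    rw [mul_div_mul_left _ _ hc]
  · right
    refine ⟨by simp [h0], ?_⟩
    have : (∑ i : Fin (r + 1), if 1 ≤ i.1 ∧ i.1 < r then (c • v) i else 0) =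
      c * (∑ i : Fin (r + 1), if 1 ≤ i.1 ∧ i.1 < r then v i else 0) := by
      rw [Finset.mul_sum]
      refine Finset.sum_congr rfl fun i _ => ?_
      split_ifs <;> simp
    rw [this, h, mul_zero]

theorem mem_B {r : ℕ} (α β : F) (P : Projectivization F (Fin (r + 1) → F)) :
    P ∈ BsetE F q r α β ↔ cone q r α β P.rep := Iff.rfl

theorem mk_mem_B {r : ℕ} (α β : F) (v : Fin (r + 1) → F) (hv : v ≠ 0) (h : cone q r α β v) :
    Projectivization.mk F v hv ∈ BsetE F q r α β := by
  rw [mem_B]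
  obtain ⟨a, ha⟩ := Projectivization.exists_smul_eq_mk_rep F v hv
  rw [← ha]
  exact cone_smul α β _ a.ne_zero v h

theorem vanish {r : ℕ} (α β : F) (f g : Module.Dual F (Fin (r + 1) → F))
    (h : ∀ P : ↥(BsetE F q r α β), cw (BsetE F q r α β) g P ≠ 0 → cw (BsetE F q r α β) f P ≠ 0)
    (v : Fin (r + 1) → F) (hv : cone q r α β v) (hf : f v = 0) : g v = 0 := by
  by_cases h0 : v = 0
  · rw [h0, map_zero]
  by_contra hg
  refine h ⟨_, mk_mem_B α β v h0 hv⟩ ?_ ?_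
  all_goals
    obtain ⟨a, ha⟩ := Projectivization.exists_smul_eq_mk_rep F v h0
    simp only [cw, ← ha]
    rw [Units.smul_def, map_smul]
  · simp [hg]
  · simp [hf]

theorem vanish_conv {r : ℕ} (α β : F) (f g : Module.Dual F (Fin (r + 1) → F))
    (h : ∀ v, cone q r α β v → f v = 0 → g v = 0) (P : ↥(BsetE F q r α β))
    (hg : cw (BsetE F q r α β) g P ≠ 0) : cw (BsetE F q r α β) f P ≠ 0 :=
  fun hf => hg (h _ P.2 hf)

theorem weight_eq {r : ℕ} (α β : F) (f : Module.Dual F (Fin (r + 1) → F)) :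
    Nat.card {P : ↥(BsetE F q r α β) | cw (BsetE F q r α β) f P ≠ 0} =
      Nat.card {v : Fin (r + 1) → F // cone q r α β v ∧ f v = 1} := by
  refine Nat.card_congr (Equiv.ofBijective
    (fun P => ⟨(f P.1.1.rep)⁻¹ • P.1.1.rep, cone_smul α β _ (inv_ne_zero P.2) _ P.1.2, ?_⟩) ⟨?_, ?_⟩)
  · rw [map_smul, smul_eq_mul, inv_mul_cancel₀ (show f P.1.1.rep ≠ 0 from P.2)]
  · intro P P' h
    have h' := congrArg Subtype.val h
    apply Subtype.ext
    apply Subtype.ext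
    rw [← Projectivization.mk_rep P.1.1, ← Projectivization.mk_rep P'.1.1,
      Projectivization.mk_eq_mk_iff']
    refine ⟨f P.1.1.rep * (f P'.1.1.rep)⁻¹, ?_⟩
    simp only at h'
    rw [mul_smul, ← h', smul_smul, mul_inv_cancel₀ (show f P.1.1.rep ≠ 0 from P.2), one_smul]
  · rintro ⟨v, hv, hf⟩
    have h0 : v ≠ 0 := by rintro rfl; simp at hf
    obtain ⟨a, ha⟩ := Projectivization.exists_smul_eq_mk_rep F v h0
    have hfa : f (Projectivization.mk F v h0).rep = a := by
      rw [← ha, Units.smul_def, map_smul, hf]; simp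
    refine ⟨⟨⟨_, mk_mem_B α β v h0 hv⟩, ?_⟩, ?_⟩
    · change f (Projectivization.mk F v h0).rep ≠ 0
      rw [hfa]; exact a.ne_zero
    · apply Subtype.ext
      change (f (Projectivization.mk F v h0).rep)⁻¹ • (Projectivization.mk F v h0).rep = v
      rw [hfa, ← ha, Units.smul_def, smul_smul, inv_mul_cancel₀ a.ne_zero, one_smul]

theorem decomp {n : ℕ} (f : Module.Dual F (Fin (n + 1 + 1) → F)) :
    ∃ (c b : F) (φ : Module.Dual F (Fin n → F)),
      ∀ s x y, f (mkv s x y) = c * s + φ x + b * y := by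
  let J : (Fin n → F) →ₗ[F] (Fin (n + 1 + 1) → F) :=
    { toFun := fun x => mkv 0 x 0
      map_add' := fun x x' => by rw [mkv_add]; simp
      map_smul' := fun c x => by rw [RingHom.id_apply, mkv_smul]; simp }
  refine ⟨f (mkv 1 0 0), f (mkv 0 0 1), f ∘ₗ J, fun s x y => ?_⟩
  have : mkv s x y = s • mkv 1 0 0 + J x + y • mkv 0 0 1 := by
    change _ = _ + mkv 0 x 0 + _
    rw [mkv_smul, mkv_smul, mkv_add, mkv_add]; simp
  rw [this, map_add, map_add, map_smul, map_smul]
  simp only [smul_eq_mul, LinearMap.comp_apply]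
  ring

theorem level {V : Type} [AddCommGroup V] [Module F V] [Finite V] (φ : Module.Dual F V)
    (hφ : φ ≠ 0) (c : F) :
    Nat.card {x : V // φ x = c} * Fintype.card F = Nat.card V := by
  obtain ⟨u, hu⟩ : ∃ u, φ u = 1 := by
    obtain ⟨w, hw⟩ : ∃ w, φ w ≠ 0 := by
      by_contra h
      push Not at h
      exact hφ (LinearMap.ext h)
    exact ⟨(φ w)⁻¹ • w, by rw [map_smul, smul_eq_mul, inv_mul_cancel₀ hw]⟩
  rw [← Nat.card_eq_fintype_card, ← Nat.card_prod]
  refine Nat.card_congr (Equiv.ofBijective (fun p => p.1.1 + p.2 • u) ⟨?_, ?_⟩)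
  · rintro ⟨⟨x, hx⟩, s⟩ ⟨⟨x', hx'⟩, s'⟩ h
    simp only at h
    have h1 := congrArg φ h
    simp only [map_add, map_smul, hu, hx, hx', smul_eq_mul, mul_one, add_right_inj] at h1
    subst h1
    simpa using h
  · intro v
    refine ⟨⟨⟨v - (φ v - c) • u, ?_⟩, φ v - c⟩, ?_⟩
    · simp [hu]
    · simp

theorem ker_le {V : Type} [AddCommGroup V] [Module F V] (φ ψ : Module.Dual F V)
    (h : ∀ x, φ x = 0 → ψ x = 0) : ∃ c : F, ∀ x, ψ x = c * φ x := by
  by_cases hφ : φ = 0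
  · exact ⟨0, fun x => by rw [h x (by simp [hφ])]; simp⟩
  obtain ⟨w, hw⟩ : ∃ w, φ w ≠ 0 := by
    by_contra h
    push Not at h
    exact hφ (LinearMap.ext h)
  refine ⟨ψ w / φ w, fun x => ?_⟩
  have := h (x - (φ x / φ w) • w) (by simp [hw])
  simp only [map_sub, map_smul, smul_eq_mul] at this
  field_simp at this ⊢
  linear_combination this

end geom

section main

def QQ {n : ℕ} (q : ℕ) (α δ : F) (x : Fin n → F) : F := ∑ i, Q1 q α δ (x i)

theorem Good.pow_sum (G : Good F q) {ι : Type} (s : Finset ι) (g : ι → F) :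
    (∑ i ∈ s, g i) ^ q = ∑ i ∈ s, g i ^ q := by
  classical
  induction s using Finset.induction_on with
  | empty => simp [G.zero]
  | insert i s hi ih => rw [Finset.sum_insert hi, Finset.sum_insert hi, G.add, ih]

theorem Good.T_sum (G : Good F q) {ι : Type} (s : Finset ι) (g : ι → F) :
    T q (∑ i ∈ s, g i) = ∑ i ∈ s, T q (g i) := by
  simp only [T, G.pow_sum, Finset.sum_add_distrib]

theorem Good.QQ_pow (G : Good F q) {n : ℕ} (α δ : F) (hδ : δ ^ q = δ) (x : Fin n → F) :
    QQ q α δ x ^ q = QQ q α δ x := by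
  rw [QQ, G.pow_sum]
  exact Finset.sum_congr rfl fun i _ => G.Q1_pow _ _ _ hδ

theorem Good.fiber' (G : Good F q) (c : F) (hc : c ^ q = c) :
    Nat.card {y : F // T q y = c} = q := by
  classical
  rw [Nat.card_eq_fintype_card, Fintype.card_subtype, G.fiber c hc]

theorem Good.card_S (G : Good F q) {n : ℕ} (α δ : F) (hδ : δ ^ q = δ) :
    Nat.card {p : (Fin n → F) × F // T q p.2 = QQ q α δ p.1} = q ^ (2 * n + 1) := by
  classical
  have e : {p : (Fin n → F) × F // T q p.2 = QQ q α δ p.1} ≃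
      Σ x : Fin n → F, {y : F // T q y = QQ q α δ x} :=
    { toFun := fun p => ⟨p.1.1, p.1.2, p.2⟩
      invFun := fun p => ⟨(p.1, p.2.1), p.2.2⟩
      left_inv := fun p => rfl
      right_inv := fun p => rfl }
  rw [Nat.card_congr e, Nat.card_sigma]
  simp only [G.fiber' _ (G.QQ_pow α δ hδ _)]
  simp [G.card]
  ring

theorem Good.count_graph (G : Good F q) {k : ℕ} (α δ : F) (hδ : δ ^ q = δ) (hδ0 : δ ≠ 0)
    (c b : F) (φ : Module.Dual F (Fin (k + 2) → F)) :
    Fintype.card F ^ (k + 1) <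
      Nat.card {x : Fin (k + 2) → F // T q ((c + φ x) / b) = QQ q α δ x} := by
  classical
  have hφ : ∀ x, φ x = ∑ i, x i * φ (Pi.single i 1) := fun x => by
    rw [LinearMap.pi_apply_eq_sum_univ φ x]
    refine Finset.sum_congr rfl fun i _ => ?_
    rw [smul_eq_mul]
    congr 2
    funext j
    simp [Pi.single_apply, eq_comm]
  have := G.count α δ hδ hδ0 k (fun i => φ (Pi.single i 1) / b) (T q (c / b)) (G.T_pow _)
  refine lt_of_lt_of_eq this (Nat.card_congr (Equiv.subtypeEquivRight fun x => ?_))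
  have h1 : ∑ i, hh q α δ (φ (Pi.single i 1) / b) (x i) = QQ q α δ x + T q (φ x / b) := by
    simp only [hh, Finset.sum_add_distrib, QQ]
    rw [hφ x, Finset.sum_div, G.T_sum]
    congr 1
    refine Finset.sum_congr rfl fun i _ => ?_
    congr 1
    ring
  rw [h1, add_div, G.T_add]
  have h2 := G.two (T q (φ x / b))
  constructor
  · intro h
    linear_combination - h + h2
  · intro h
    linear_combination - h + h2

theorem Good.count_SH (G : Good F q) {k : ℕ} (α δ : F) (hδ : δ ^ q = δ) (hδ0 : δ ≠ 0)
    (c b : F) (φ : Module.Dual F (Fin (k + 2) → F)) (hne : φ ≠ 0 ∨ b ≠ 0) :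
    Fintype.card F ^ (k + 1) <
      Nat.card {p : (Fin (k + 2) → F) × F // T q p.2 = QQ q α δ p.1 ∧ c + φ p.1 + b * p.2 = 0} := by
  classical
  by_cases hb : b = 0
  · have hφ : φ ≠ 0 := by tauto
    have e : {p : (Fin (k + 2) → F) × F // T q p.2 = QQ q α δ p.1 ∧ c + φ p.1 + b * p.2 = 0} ≃
      Σ x : {x : Fin (k + 2) → F // φ x = -c}, {y : F // T q y = QQ q α δ x.1} :=
    { toFun := fun p => ⟨⟨p.1.1, by
          have := p.2.2
          linear_combination this - p.1.2 * hb⟩, p.1.2, p.2.1⟩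
      invFun := fun p => ⟨(p.1.1, p.2.1), p.2.2, by rw [p.1.2, hb]; ring⟩
      left_inv := fun p => rfl
      right_inv := fun p => rfl }
    rw [Nat.card_congr e, Nat.card_sigma]
    simp only [G.fiber' _ (G.QQ_pow α δ hδ _)]
    have hl := level φ hφ (-c)
    have hc : Nat.card (Fin (k + 2) → F) = Fintype.card F ^ (k + 1) * Fintype.card F := by
      simp [pow_succ]
    rw [hc] at hl
    have hl' := Nat.eq_of_mul_eq_mul_right Fintype.card_pos hl
    rw [Finset.sum_const, Finset.card_univ, ← Nat.card_eq_fintype_card (α := {x // φ x = -c}), hl', smul_eq_mul]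
    have := G.gt
    have hpos : 0 < Fintype.card F ^ (k + 1) := pow_pos Fintype.card_pos _
    nlinarith
  · refine lt_of_lt_of_le (G.count_graph α δ hδ hδ0 c b φ) ?_
    refine Nat.card_le_card_of_injective (fun x => ⟨(x.1, (c + φ x.1) / b), x.2, ?_⟩) ?_
    · have := G.two (c + φ x.1)
      field_simp
      linear_combination this
    · intro x x' h
      apply Subtype.ext
      exact congrArg (fun p => p.1.1) h

theorem inf_bound {V : Type} [AddCommGroup V] [Module F V] [Finite V] (Λ ψ : Module.Dual F V)
    (hΛ : Λ ≠ 0) :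
    Nat.card {v : V // Λ v = 0 ∧ ψ v = 1} * Fintype.card F * Fintype.card F ≤ Nat.card V := by
  by_cases h : ∃ v, Λ v = 0 ∧ ψ v = 1
  · obtain ⟨u, hu, hu'⟩ := h
    have h1 : ψ ∘ₗ (LinearMap.ker Λ).subtype ≠ 0 := by
      intro h
      have := LinearMap.congr_fun h ⟨u, hu⟩
      simp [hu'] at this
    have h2 := level (V := LinearMap.ker Λ) _ h1 1
    have h3 := level Λ hΛ 0
    have e : {v : V // Λ v = 0 ∧ ψ v = 1} ≃
        {x : LinearMap.ker Λ // (ψ ∘ₗ (LinearMap.ker Λ).subtype) x = 1} :=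
      { toFun := fun v => ⟨⟨v.1, v.2.1⟩, v.2.2⟩
        invFun := fun v => ⟨v.1.1, v.1.2, v.2⟩
        left_inv := fun v => rfl
        right_inv := fun v => rfl }
    rw [Nat.card_congr e, h2, ← h3]
    exact le_of_eq rfl
  · have : IsEmpty {v : V // Λ v = 0 ∧ ψ v = 1} := ⟨fun v => h ⟨v.1, v.2⟩⟩
    simp

def sumF (n : ℕ) : Module.Dual F (Fin n → F) := ∑ i, LinearMap.proj i

theorem sumF_apply (n : ℕ) (x : Fin n → F) : sumF n x = ∑ i, x i := by
  simp [sumF]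

theorem sumF_ne (n : ℕ) : (sumF (n + 1) : Module.Dual F (Fin (n + 1) → F)) ≠ 0 := by
  intro h
  have := LinearMap.congr_fun h (Pi.single 0 1)
  simp [sumF_apply] at this

theorem Good.cone_of (G : Good F q) {n : ℕ} (α β s : F) (hs : s ≠ 0) (x : Fin n → F) (y : F)
    (h : cone q (n + 1) α β (mkv s x y)) :
    T q (s⁻¹ * y) = QQ q α (β ^ q + β) (s⁻¹ • x) := by
  have := cone_smul α β s⁻¹ (inv_ne_zero hs) _ h
  rw [mkv_smul, inv_mul_cancel₀ hs, G.cone_aff] at this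
  exact this

theorem Good.weight_lt (G : Good F q) {k : ℕ} (α β : F) (hδ : (β ^ q + β) ^ q = β ^ q + β)
    (hδ0 : β ^ q + β ≠ 0) (f : Module.Dual F (Fin (k + 2 + 1 + 1) → F))
    (c b : F) (φ : Module.Dual F (Fin (k + 2) → F)) (hne : φ ≠ 0 ∨ b ≠ 0)
    (hf : ∀ s x y, f (mkv s x y) = c * s + φ x + b * y) :
    Nat.card {v : Fin (k + 2 + 1 + 1) → F // cone q (k + 2 + 1) α β v ∧ f v = 1} <
      q ^ (2 * (k + 2) + 1) := by
  classical
  set δ := β ^ q + β with hδd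
  let Λ : Module.Dual F ((Fin (k + 2) → F) × F) := sumF (k + 2) ∘ₗ LinearMap.fst F _ _
  let ψ : Module.Dual F ((Fin (k + 2) → F) × F) :=
    φ ∘ₗ LinearMap.fst F _ _ + b • LinearMap.snd F _ _
  have hΛ : Λ ≠ 0 := by
    intro h
    apply sumF_ne (F := F) (k + 1)
    ext x
    have := LinearMap.congr_fun h (Pi.single x 1, 0)
    simpa [Λ] using this
  have hI := inf_bound Λ ψ hΛ
  have hI' : Nat.card {v : (Fin (k + 2) → F) × F // Λ v = 0 ∧ ψ v = 1} ≤ Fintype.card F ^ (k + 1) := by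
    have hc : Nat.card ((Fin (k + 2) → F) × F) =
        Fintype.card F ^ (k + 1) * Fintype.card F * Fintype.card F := by
      simp [pow_succ]
    rw [hc] at hI
    exact Nat.le_of_mul_le_mul_right (Nat.le_of_mul_le_mul_right hI Fintype.card_pos)
      Fintype.card_pos
  have hSH := G.count_SH α δ hδ hδ0 c b φ hne
  have hS := G.card_S (n := k + 2) α δ hδ
  -- splitting
  let pr : (Fin (k + 2 + 1 + 1) → F) → (Fin (k + 2) → F) × F := fun v =>
    (fun i => v i.castSucc.succ, v (Fin.last _))
  have hpr : ∀ s x y, pr (mkv s x y) = (x, y) := fun s x y => by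
    simp only [pr, mkv_mid, mkv_last]
  rw [Nat.card_eq_fintype_card, Fintype.card_subtype] at hS hSH hI' ⊢
  set W := Finset.univ.filter fun v : Fin (k + 2 + 1 + 1) → F => cone q (k + 2 + 1) α β v ∧ f v = 1
  set S := Finset.univ.filter fun p : (Fin (k + 2) → F) × F => T q p.2 = QQ q α δ p.1 with hSd
  rw [← Finset.filter_filter, ← hSd] at hSH
  have hW1 : (W.filter fun v => v 0 ≠ 0).card ≤
      (S.filter fun p => ¬ (c + φ p.1 + b * p.2 = 0)).card := by
    refine Finset.card_le_card_of_injOn (fun v => pr ((v 0)⁻¹ • v)) ?_ ?_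
    · intro v hv
      obtain ⟨s, x, y, rfl⟩ := exists_mkv v
      simp only [Finset.coe_filter, Set.mem_ofPred_eq, W, Finset.mem_filter, Finset.mem_univ,
        true_and, mkv_zero, S] at hv ⊢
      obtain ⟨⟨h1, h2⟩, h3⟩ := hv
      rw [mkv_smul, hpr]
      refine ⟨G.cone_of α β s h3 x y h1, ?_⟩
      rw [hf] at h2
      simp only [map_smul, smul_eq_mul]
      intro h4
      have : c * s + φ x + b * y = s * (c + s⁻¹ * φ x + b * (s⁻¹ * y)) := by
        field_simp
      rw [this, h4] at h2
      simp at h2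
    · intro v hv v' hv' h
      obtain ⟨s, x, y, rfl⟩ := exists_mkv v
      obtain ⟨s', x', y', rfl⟩ := exists_mkv v'
      simp only [Finset.coe_filter, Set.mem_ofPred_eq, W, Finset.mem_filter, Finset.mem_univ,
        true_and, mkv_zero] at hv hv' h
      obtain ⟨⟨-, h2⟩, h3⟩ := hv
      obtain ⟨⟨-, h2'⟩, h3'⟩ := hv'
      rw [mkv_smul, mkv_smul, hpr, hpr, Prod.mk.injEq] at h
      have hx : mkv s x y = s • mkv 1 (s⁻¹ • x) (s⁻¹ * y) := by
        rw [mkv_smul, smul_smul, mul_inv_cancel₀ h3, one_smul, mul_inv_cancel_left₀ h3, mul_one]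
      have hx' : mkv s' x' y' = s' • mkv 1 (s⁻¹ • x) (s⁻¹ * y) := by
        rw [h.1, h.2, mkv_smul, smul_smul, mul_inv_cancel₀ h3', one_smul,
          mul_inv_cancel_left₀ h3', mul_one]
      rw [hx, map_smul, smul_eq_mul] at h2
      rw [hx', map_smul, smul_eq_mul] at h2'
      have h5 := h2'.trans h2.symm
      have h0 : f (mkv 1 (s⁻¹ • x) (s⁻¹ * y)) ≠ 0 := by
        intro h; rw [h] at h2; simp at h2
      rw [hx, hx', mul_right_cancel₀ h0 h5]
  have hW2 : (W.filter fun v => ¬ v 0 ≠ 0).card ≤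
      (Finset.univ.filter fun v : (Fin (k + 2) → F) × F => Λ v = 0 ∧ ψ v = 1).card := by
    refine Finset.card_le_card_of_injOn pr ?_ ?_
    · intro v hv
      obtain ⟨s, x, y, rfl⟩ := exists_mkv v
      simp only [Finset.coe_filter, Set.mem_ofPred_eq, W, Finset.mem_filter, Finset.mem_univ,
        true_and, mkv_zero, not_not] at hv ⊢
      obtain ⟨⟨h1, h2⟩, rfl⟩ := hv
      rw [hpr]
      rw [cone_inf] at h1
      rw [hf] at h2
      refine ⟨by simpa [Λ, sumF_apply] using h1, by simpa [ψ] using h2⟩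
    · intro v hv v' hv' h
      obtain ⟨s, x, y, rfl⟩ := exists_mkv v
      obtain ⟨s', x', y', rfl⟩ := exists_mkv v'
      simp only [Finset.coe_filter, Set.mem_ofPred_eq, W, Finset.mem_filter, Finset.mem_univ,
        true_and, mkv_zero, not_not] at hv hv'
      rw [hpr, hpr, Prod.mk.injEq] at h
      rw [hv.2, hv'.2, h.1, h.2]
  have e1 := Finset.card_filter_add_card_filter_not (s := W) (fun v => v 0 ≠ 0)
  have e2 := Finset.card_filter_add_card_filter_not (s := S) (fun p => c + φ p.1 + b * p.2 = 0)
  omega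

theorem Good.weight_X0 (G : Good F q) {n : ℕ} (α β : F) (hδ : (β ^ q + β) ^ q = β ^ q + β)
    (c : F) (hc : c ≠ 0) :
    Nat.card {v : Fin (n + 1 + 1) → F // cone q (n + 1) α β v ∧
      (c • (LinearMap.proj 0 : (Fin (n + 1 + 1) → F) →ₗ[F] F)) v = 1} = q ^ (2 * n + 1) := by
  rw [← G.card_S (n := n) α _ hδ]
  symm
  refine Nat.card_congr (Equiv.ofBijective (fun p => ⟨c⁻¹ • mkv 1 p.1.1 p.1.2,
    cone_smul α β _ (inv_ne_zero hc) _ ((G.cone_aff α β _ _).2 p.2), ?_⟩) ⟨?_, ?_⟩)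
  · simp [mkv_zero, hc]
  · intro p p' h
    have h' := congrArg Subtype.val h
    simp only at h'
    have h2 := mkv_ext (smul_right_injective _ (inv_ne_zero hc) h')
    apply Subtype.ext
    exact Prod.ext h2.2.1 h2.2.2
  · rintro ⟨v, h1, h2⟩
    obtain ⟨s, x, y, rfl⟩ := exists_mkv v
    simp only [LinearMap.smul_apply, LinearMap.proj_apply, mkv_zero, smul_eq_mul] at h2
    have hs : s ≠ 0 := by rintro rfl; simp at h2
    have hcs : c = s⁻¹ := eq_inv_of_mul_eq_one_left h2
    refine ⟨⟨(s⁻¹ • x, s⁻¹ * y), G.cone_of α β s hs x y h1⟩, ?_⟩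
    apply Subtype.ext
    simp only [hcs, inv_inv, mkv_smul, mul_one, smul_smul, mul_inv_cancel₀ hs, one_smul,
      mul_inv_cancel_left₀ hs]

theorem Good.minimal (G : Good F q) {k : ℕ} (α β : F) (hδ : (β ^ q + β) ^ q = β ^ q + β)
    (hδ0 : β ^ q + β ≠ 0) (f g : Module.Dual F (Fin (k + 2 + 1 + 1) → F))
    (c b : F) (φ : Module.Dual F (Fin (k + 2) → F)) (hne : φ ≠ 0 ∨ b ≠ 0)
    (hf : ∀ s x y, f (mkv s x y) = c * s + φ x + b * y)
    (hv : ∀ v, cone q (k + 2 + 1) α β v → f v = 0 → g v = 0) : ∃ a : F, g = a • f := by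
  classical
  obtain ⟨c', b', φ', hg⟩ := decomp g
  set δ := β ^ q + β with hδd
  have haff : ∀ x y, T q y = QQ q α δ x → c + φ x + b * y = 0 → c' + φ' x + b' * y = 0 := by
    intro x y h1 h2
    have := hv (mkv 1 x y) ((G.cone_aff α β x y).2 h1) (by rw [hf, mul_one, h2])
    rwa [hg, mul_one] at this
  have hinf : ∀ x y, sumF (k + 2) x = 0 → φ x + b * y = 0 → φ' x + b' * y = 0 := by
    intro x y h1 h2
    have := hv (mkv 0 x y) ((cone_inf α β x y).2 (by rwa [sumF_apply] at h1))
      (by rw [hf, mul_zero, zero_add, h2])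
    rwa [hg, mul_zero, zero_add] at this
  suffices h : ∃ a : F, c' = a * c ∧ b' = a * b ∧ ∀ x, φ' x = a * φ x by
    obtain ⟨a, h1, h2, h3⟩ := h
    refine ⟨a, LinearMap.ext fun v => ?_⟩
    obtain ⟨s, x, y, rfl⟩ := exists_mkv v
    rw [LinearMap.smul_apply, hf, hg, h1, h2, h3, smul_eq_mul]
    ring
  by_cases hb : b = 0
  · subst hb
    have hφ : φ ≠ 0 := by tauto
    simp only [zero_mul, add_zero] at haff
    obtain ⟨x1, hx1⟩ : ∃ x, c + φ x = 0 := by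
      obtain ⟨w, hw⟩ : ∃ w, φ w ≠ 0 := by
        by_contra h
        push Not at h
        exact hφ (LinearMap.ext h)
      refine ⟨(-c / φ w) • w, ?_⟩
      rw [map_smul, smul_eq_mul, div_mul_cancel₀ _ hw]; ring
    obtain ⟨y1, hy1⟩ := G.T_surj _ (G.QQ_pow α δ hδ x1)
    have h1 := haff x1 y1 hy1 hx1
    have h2 := haff x1 (y1 + 1) (by rw [G.T_add, hy1]; simp [T, G.two]) hx1
    have hb' : b' = 0 := by linear_combination h2 - h1
    subst hb'
    obtain ⟨a, ha⟩ := ker_le φ φ' (by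
      intro x hx
      obtain ⟨y, hy⟩ := G.T_surj _ (G.QQ_pow α δ hδ (x1 + x))
      have := haff (x1 + x) y hy (by rw [map_add, hx, add_zero, hx1])
      rw [map_add] at this
      linear_combination this - h1)
    refine ⟨a, ?_, by simp, ha⟩
    rw [ha x1] at h1
    linear_combination h1 - a * hx1
  · have hcnt := G.count_graph α δ hδ hδ0 c b φ
    have hgr : ∀ x, T q ((c + φ x) / b) = QQ q α δ x →
        c' + φ' x + b' * ((c + φ x) / b) = 0 := by
      intro x hx
      refine haff x _ hx ?_
      rw [mul_div_cancel₀ _ hb]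
      exact G.two _
    -- reduced functional
    set a := b' / b with ha
    have hab : b' = a * b := by rw [ha, div_mul_cancel₀ _ hb]
    obtain ⟨l, hl⟩ := ker_le (sumF (k + 2)) (φ' - a • φ) (by
      intro x hx
      have := hinf x (-φ x / b) hx (by field_simp; ring)
      simp only [LinearMap.sub_apply, LinearMap.smul_apply, smul_eq_mul]
      rw [hab] at this
      field_simp at this
      linear_combination this)
    simp only [LinearMap.sub_apply, LinearMap.smul_apply, smul_eq_mul] at hl
    have hred : ∀ x, T q ((c + φ x) / b) = QQ q α δ x →
        (c' - a * c) + l * sumF (k + 2) x = 0 := by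
      intro x hx
      have h1 := hgr x hx
      rw [← hl]
      rw [hab] at h1
      have h2 : a * b * ((c + φ x) / b) = a * (c + φ x) := by field_simp
      rw [h2] at h1
      have h3 := G.two (a * (c + φ x))
      linear_combination h1 - h3
    have hl0 : l = 0 := by
      by_contra hl0
      have hlev := level (sumF (k + 2)) (sumF_ne (F := F) (k + 1)) (-(c' - a * c) / l)
      have hc : Nat.card (Fin (k + 2) → F) = Fintype.card F ^ (k + 1) * Fintype.card F := by
        simp [pow_succ]
      rw [hc] at hlev
      have hlev' := Nat.eq_of_mul_eq_mul_right Fintype.card_pos hlev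
      rw [← hlev'] at hcnt
      refine absurd hcnt (not_lt.2 ?_)
      refine Nat.card_le_card_of_injective (fun x => ⟨x.1, ?_⟩) ?_
      · have := hred x.1 x.2
        field_simp
        linear_combination this
      · intro x x' h
        exact Subtype.ext (congrArg (fun p => p.1) h)
    have hne' : Nonempty {x : Fin (k + 2) → F // T q ((c + φ x) / b) = QQ q α δ x} := by
      have : 0 < Nat.card {x : Fin (k + 2) → F // T q ((c + φ x) / b) = QQ q α δ x} := by omega
      exact (Nat.card_pos_iff.1 this).1
    obtain ⟨x, hx⟩ := hne'
    have := hred x hx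
    rw [hl0] at this hl
    refine ⟨a, by linear_combination this, hab, fun x => by linear_combination hl x⟩

theorem Good.X0_not_minimal (G : Good F q) {n : ℕ} (α β : F)
    (hδ : (β ^ q + β) ^ q = β ^ q + β) (c : F) :
    ¬ IsMinimalWord (BsetE F q (n + 1 + 1) α β)
      (c • (LinearMap.proj 0 : (Fin (n + 1 + 1 + 1) → F) →ₗ[F] F)) := by
  rintro ⟨h1, h2⟩
  have hc : c ≠ 0 := by
    rintro rfl
    apply h1
    funext P
    simp [cw]
  let J : (Fin (n + 1 + 1 + 1) → F) →ₗ[F] (Fin (n + 1) → F) :=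
    LinearMap.funLeft F F (fun i : Fin (n + 1) => i.castSucc.succ)
  let g : Module.Dual F (Fin (n + 1 + 1 + 1) → F) := sumF (n + 1) ∘ₗ J
  have hg : ∀ s x y, g (mkv s x y) = sumF (n + 1) x := by
    intro s x y
    have : J (mkv s x y) = x := by
      funext i
      simp only [J, LinearMap.funLeft_apply, mkv_mid]
    simp only [g, LinearMap.comp_apply, this]
  -- evaluating codeword identities on the cone
  have heval : ∀ f' g' : Module.Dual F (Fin (n + 1 + 1 + 1) → F),
      cw (BsetE F q (n + 1 + 1) α β) f' = cw (BsetE F q (n + 1 + 1) α β) g' →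
      ∀ v, cone q (n + 1 + 1) α β v → f' v = g' v := by
    intro f' g' h v hv
    have := vanish α β 0 (f' - g') (q := q) (by
      intro P hP
      exfalso
      apply hP
      have := congrFun h P
      simp only [cw] at this
      simp [cw, this]) v hv (by simp)
    simpa [sub_eq_zero] using this
  obtain ⟨y, hy⟩ := G.T_surj _ (G.QQ_pow α _ hδ (Pi.single 0 1 : Fin (n + 1) → F))
  have hc1 : cone q (n + 1 + 1) α β (mkv 1 (Pi.single 0 1 : Fin (n + 1) → F) y) :=
    (G.cone_aff α β _ _).2 hy
  have hc0 : cone q (n + 1 + 1) α β (mkv 1 (0 : Fin (n + 1) → F) 0) :=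
    (G.cone_aff α β _ _).2 (by simp [G.T_zero, Q1])
  have hg1 : g (mkv 1 (Pi.single 0 1 : Fin (n + 1) → F) y) = 1 := by
    rw [hg, sumF_apply]; simp
  obtain ⟨a, ha⟩ := h2 g (by
    intro h0
    have := heval g 0 (by rw [h0]; funext P; simp [cw]) _ hc1
    rw [hg1] at this
    simp at this) (vanish_conv α β _ _ (by
      intro v hv hv0
      obtain ⟨s, x, y, rfl⟩ := exists_mkv v
      simp only [LinearMap.smul_apply, LinearMap.proj_apply, mkv_zero, smul_eq_mul] at hv0
      have hs : s = 0 := by simpa [hc] using hv0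
      subst hs
      rw [cone_inf] at hv
      rw [hg, sumF_apply, hv]))
  have hfin := heval g (a • c • (LinearMap.proj 0 : (Fin (n + 1 + 1 + 1) → F) →ₗ[F] F)) (by
    rw [ha]; funext P; simp [cw])
  have e0 := hfin _ hc0
  have e1 := hfin _ hc1
  rw [hg1] at e1
  rw [hg, map_zero] at e0
  simp only [LinearMap.smul_apply, LinearMap.proj_apply, mkv_zero] at e0 e1
  rw [← e0] at e1
  simp at e1

end main

end S10

/-- for `q > 2` even and `r ≥ 3`, `C(B)` is not minimal; a nonzero
codeword is non-minimal iff it corresponds to a nonzero scalar multiple of the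
coordinate functional `X₀`, iff it has weight `q^{2r−1}`; and there are exactly
`q²−1` codewords of weight `q^{2r−1}`. -/
theorem statement10 (q r : ℕ) (hq : IsPrimePow q) (hqeven : Even q) (hq2 : 2 < q)
    (hr : 3 ≤ r)
    (F : Type) [Field F] [Fintype F] (hF : Fintype.card F = q ^ 2)
    (α β : F) (hα : α ≠ 0) (hβ : β ^ q ≠ β)
    (hcond : Odd r ∨ (Even r ∧ ∀ m : ℕ, q = 2 ^ m →
      ∑ i ∈ Finset.range m, (α ^ (q + 1) / (β ^ q + β) ^ 2) ^ 2 ^ i = 0)) :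
    ¬ IsMinimalCode (BsetE F q r α β) ∧
    (∀ f : Module.Dual F (Fin (r + 1) → F), cw (BsetE F q r α β) f ≠ 0 →
      (¬ IsMinimalWord (BsetE F q r α β) f ↔
        ∃ c : F, c ≠ 0 ∧ f = c • (LinearMap.proj 0 : (Fin (r + 1) → F) →ₗ[F] F))) ∧
    (∀ f : Module.Dual F (Fin (r + 1) → F), cw (BsetE F q r α β) f ≠ 0 →
      ((∃ c : F, c ≠ 0 ∧ f = c • (LinearMap.proj 0 : (Fin (r + 1) → F) →ₗ[F] F)) ↔
        Nat.card {P : ↥(BsetE F q r α β) | cw (BsetE F q r α β) f P ≠ 0} =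
          q ^ (2 * r - 1))) ∧
    Nat.card {c : ↥(BsetE F q r α β) → F |
        (∃ f : Module.Dual F (Fin (r + 1) → F), c = cw (BsetE F q r α β) f) ∧
        Nat.card {P : ↥(BsetE F q r α β) | c P ≠ 0} = q ^ (2 * r - 1)} = q ^ 2 - 1 := by
  classical
  have G := S10.good_of q hq hqeven hq2 F hF
  obtain ⟨k, rfl⟩ : ∃ k, r = k + 2 + 1 := ⟨r - 3, by omega⟩
  have hδ : (β ^ q + β) ^ q = β ^ q + β := by rw [G.add, G.qq, add_comm]
  have hδ0 : β ^ q + β ≠ 0 := by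
    intro h
    apply hβ
    have := G.two β
    linear_combination h - this
  have hexp : 2 * (k + 2 + 1) - 1 = 2 * (k + 2) + 1 := by omega
  rw [hexp]
  have hwX : ∀ c : F, c ≠ 0 → Nat.card {P : ↥(BsetE F q (k + 2 + 1) α β) |
      cw (BsetE F q (k + 2 + 1) α β)
        (c • (LinearMap.proj 0 : (Fin (k + 2 + 1 + 1) → F) →ₗ[F] F)) P ≠ 0} =
          q ^ (2 * (k + 2) + 1) := by
    intro c hc
    rw [S10.weight_eq, G.weight_X0 α β hδ c hc]
  have hX : ∀ c : F, ¬ IsMinimalWord (BsetE F q (k + 2 + 1) α β)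
      (c • (LinearMap.proj 0 : (Fin (k + 2 + 1 + 1) → F) →ₗ[F] F)) :=
    fun c => G.X0_not_minimal α β hδ c
  have hpos : 0 < q ^ (2 * (k + 2) + 1) := pow_pos G.qpos _
  have hnz : ∀ f : Module.Dual F (Fin (k + 2 + 1 + 1) → F),
      Nat.card {P : ↥(BsetE F q (k + 2 + 1) α β) | cw (BsetE F q (k + 2 + 1) α β) f P ≠ 0} =
          q ^ (2 * (k + 2) + 1) → cw (BsetE F q (k + 2 + 1) α β) f ≠ 0 := by
    intro f hf h0
    rw [h0] at hf
    simp at hf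
    omega
  have dich : ∀ f : Module.Dual F (Fin (k + 2 + 1 + 1) → F),
      cw (BsetE F q (k + 2 + 1) α β) f ≠ 0 →
      (∃ c : F, c ≠ 0 ∧ f = c • (LinearMap.proj 0 : (Fin (k + 2 + 1 + 1) → F) →ₗ[F] F)) ∨
      (IsMinimalWord (BsetE F q (k + 2 + 1) α β) f ∧
        Nat.card {P : ↥(BsetE F q (k + 2 + 1) α β) | cw (BsetE F q (k + 2 + 1) α β) f P ≠ 0} <
          q ^ (2 * (k + 2) + 1)) := by
    intro f hf0
    obtain ⟨c, b, φ, hf⟩ := S10.decomp f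
    by_cases hne : φ ≠ 0 ∨ b ≠ 0
    · right
      refine ⟨⟨hf0, fun g _ hsupp => ?_⟩, ?_⟩
      · obtain ⟨a, rfl⟩ := G.minimal α β hδ hδ0 f g c b φ hne hf (S10.vanish α β f g hsupp)
        exact ⟨a, by funext P; simp [cw]⟩
      · rw [S10.weight_eq]
        exact G.weight_lt α β hδ hδ0 f c b φ hne hf
    · left
      push Not at hne
      obtain ⟨rfl, rfl⟩ := hne
      have hfc : f = c • (LinearMap.proj 0 : (Fin (k + 2 + 1 + 1) → F) →ₗ[F] F) := by
        refine LinearMap.ext fun v => ?_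
        obtain ⟨s, x, y, rfl⟩ := S10.exists_mkv v
        rw [hf]
        simp [S10.mkv_zero]
      refine ⟨c, ?_, hfc⟩
      rintro rfl
      apply hf0
      rw [hfc]
      funext P
      simp [cw]
  refine ⟨fun h => hX 1 (h _ (hnz _ (hwX 1 one_ne_zero))), fun f hf => ⟨fun h => ?_, ?_⟩,
    fun f hf => ⟨?_, fun h => ?_⟩, ?_⟩
  · rcases dich f hf with h1 | h1
    · exact h1
    · exact absurd h1.1 h
  · rintro ⟨c, -, rfl⟩
    exact hX c
  · rintro ⟨c, hc, rfl⟩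
    exact hwX c hc
  · rcases dich f hf with h1 | h1
    · exact h1
    · omega
  · have hcard : Nat.card {c : F // c ≠ 0} = q ^ 2 - 1 := by
      rw [Nat.card_eq_fintype_card, Fintype.card_subtype_compl, hF]
      simp
    rw [← hcard]
    symm
    refine Nat.card_congr (Equiv.ofBijective (fun c => ⟨cw (BsetE F q (k + 2 + 1) α β)
      (c.1 • (LinearMap.proj 0 : (Fin (k + 2 + 1 + 1) → F) →ₗ[F] F)), ⟨_, rfl⟩, hwX c.1 c.2⟩)
      ⟨?_, ?_⟩)
    · intro c c' h
      have h' := congrArg Subtype.val h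
      simp only at h'
      apply Subtype.ext
      have h1 := hnz _ (hwX 1 one_ne_zero)
      obtain ⟨P, hP⟩ := Function.ne_iff.1 h1
      have h2 := congrFun h' P
      simp only [cw, LinearMap.smul_apply, LinearMap.proj_apply, smul_eq_mul, one_mul,
        Pi.zero_apply] at h2 hP
      exact mul_right_cancel₀ hP h2
    · rintro ⟨w, ⟨f, rfl⟩, hw⟩
      rcases dich f (hnz f hw) with ⟨c, hc, rfl⟩ | h1
      · exact ⟨⟨c, hc⟩, rfl⟩
      · exact absurd hw h1.2.ne
end

section
/- Let q be a prime power, let H be a quasi-Hermitian variety of PG(3,q²), and let P be a point of H. Then P lies on exactly q³+q²+1 planes meeting H in q³+q²+1 points and on exactly q⁴−q³ planes meeting H in q³+1 points. -/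
open Module in
theorem card_planes_aux (F : Type) [Field F] [Fintype F] (U : Submodule F (Fin 4 → F)) (n : ℕ)
    (hU : finrank F U + n = 4) :
    Nat.card {W : Submodule F (Fin 4 → F) // finrank F W = 3 ∧ U ≤ W} =
      ∑ i ∈ Finset.range n, Nat.card F ^ i := by
  have hA : finrank F U.dualAnnihilator = n := by
    have := Subspace.finrank_add_finrank_dualAnnihilator_eq U
    rw [finrank_fin_fun] at this
    omega
  rw [← Projectivization.card_of_finrank F U.dualAnnihilator hA,
    Nat.card_congr (Projectivization.equivSubmodule F U.dualAnnihilator)]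
  symm
  have hfin : ∀ Φ : Submodule F U.dualAnnihilator,
      finrank F (Φ.map U.dualAnnihilator.subtype) = finrank F Φ := fun Φ =>
    LinearEquiv.finrank_eq (Submodule.equivMapOfInjective _ Subtype.val_injective Φ).symm
  refine Nat.card_eq_of_bijective
    (fun Φ => ⟨(Φ.1.map U.dualAnnihilator.subtype).dualCoannihilator, ?_, ?_⟩) ⟨?_, ?_⟩
  · have := Subspace.finrank_add_finrank_dualCoannihilator_eq
      (Φ.1.map U.dualAnnihilator.subtype)
    rw [finrank_fin_fun, hfin, Φ.2] at this
    omega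
  · rw [← Submodule.le_dualAnnihilator_iff_le_dualCoannihilator]
    exact Submodule.map_subtype_le _ _
  · intro Φ Ψ h
    have h' := congrArg Submodule.dualAnnihilator (congrArg Subtype.val h)
    simp only [Subspace.dualCoannihilator_dualAnnihilator_eq] at h'
    exact Subtype.ext (Submodule.map_injective_of_injective Subtype.val_injective h')
  · rintro ⟨W, hW, hUW⟩
    have hle : W.dualAnnihilator ≤ U.dualAnnihilator := Submodule.dualAnnihilator_anti hUW
    have hm : (W.dualAnnihilator.comap U.dualAnnihilator.subtype).map
        U.dualAnnihilator.subtype = W.dualAnnihilator := by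
      rw [Submodule.map_comap_subtype, inf_eq_right.2 hle]
    refine ⟨⟨W.dualAnnihilator.comap U.dualAnnihilator.subtype, ?_⟩, ?_⟩
    · rw [← hfin, hm]
      have := Subspace.finrank_add_finrank_dualAnnihilator_eq W
      rw [finrank_fin_fun] at this
      omega
    · apply Subtype.ext
      simp only [hm, Subspace.dualAnnihilator_dualCoannihilator_eq]


/-- every point `P₀` of a quasi-Hermitian variety `H` of `PG(3,q²)`
lies on exactly `q³+q²+1` planes meeting `H` in `q³+q²+1` points and on exactly
`q⁴−q³` planes meeting `H` in `q³+1` points. -/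
theorem statement13 (q : ℕ) (hq : IsPrimePow q)
    (F : Type) [Field F] [Fintype F] (hF : Fintype.card F = q ^ 2)
    (H : Set (Projectivization F (Fin 4 → F)))
    (hcard : Nat.card ↥H = (q ^ 3 + 1) * (q ^ 2 + 1))
    (hplane : ∀ W : Submodule F (Fin 4 → F), Module.finrank F W = 3 →
      Nat.card ↥(H ∩ {P | P.rep ∈ W}) = q ^ 3 + 1 ∨
      Nat.card ↥(H ∩ {P | P.rep ∈ W}) = q ^ 3 + q ^ 2 + 1)
    (P₀ : Projectivization F (Fin 4 → F)) (hP₀ : P₀ ∈ H) :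
    Nat.card {W : Submodule F (Fin 4 → F) | Module.finrank F W = 3 ∧ P₀.rep ∈ W ∧
        Nat.card ↥(H ∩ {P | P.rep ∈ W}) = q ^ 3 + q ^ 2 + 1} = q ^ 3 + q ^ 2 + 1 ∧
    Nat.card {W : Submodule F (Fin 4 → F) | Module.finrank F W = 3 ∧ P₀.rep ∈ W ∧
        Nat.card ↥(H ∩ {P | P.rep ∈ W}) = q ^ 3 + 1} = q ^ 4 - q ^ 3 := by
  classical
  have hNF : Nat.card F = q ^ 2 := by rw [Nat.card_eq_fintype_card, hF]
  have : Finite (Projectivization F (Fin 4 → F)) :=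
    (Projectivization.finite_iff_of_finite F _).2 inferInstance
  have : Fintype (Projectivization F (Fin 4 → F)) := Fintype.ofFinite _
  have : Finite (Submodule F (Fin 4 → F)) :=
    Finite.of_injective (fun W => (W : Set (Fin 4 → F))) SetLike.coe_injective
  have : Fintype (Submodule F (Fin 4 → F)) := Fintype.ofFinite _
  have hq0 : 0 < q := hq.pos
  -- planes through one point
  have h1 : Nat.card {W : Submodule F (Fin 4 → F) // Module.finrank F W = 3 ∧ P₀.rep ∈ W} =
      q ^ 4 + q ^ 2 + 1 := by
    have h := card_planes_aux F (Submodule.span F {P₀.rep}) 3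
      (by rw [finrank_span_singleton P₀.rep_nonzero])
    simp only [Submodule.span_singleton_le_iff_mem] at h
    rw [h, hNF]
    simp [Finset.sum_range_succ]
    ring
  -- planes through two points
  have h2 : ∀ Q : Projectivization F (Fin 4 → F), Q ≠ P₀ →
      Nat.card {W : Submodule F (Fin 4 → F) //
        (Module.finrank F W = 3 ∧ P₀.rep ∈ W) ∧ Q.rep ∈ W} = q ^ 2 + 1 := by
    intro Q hQ
    have hli := (Projectivization.independent_iff).1
      ((Projectivization.independent_pair_iff_ne P₀ Q).2 hQ.symm)
    have hfr := finrank_span_eq_card hli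
    have hr : Set.range (Projectivization.rep ∘ ![P₀, Q]) = {P₀.rep, Q.rep} := by
      rw [Set.range_comp]
      simp [Set.image_pair, Set.pair_comm]
    rw [hr] at hfr
    have h := card_planes_aux F (Submodule.span F {P₀.rep, Q.rep}) 2
      (by rw [hfr]; simp)
    simp only [Submodule.span_le, Set.insert_subset_iff, Set.singleton_subset_iff,
      SetLike.mem_coe, ← and_assoc] at h
    rw [h, hNF]
    simp [Finset.sum_range_succ]
    ring
  set S : Finset (Submodule F (Fin 4 → F)) :=
    Finset.univ.filter (fun W => Module.finrank F W = 3 ∧ P₀.rep ∈ W) with hS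
  set T : Finset (Projectivization F (Fin 4 → F)) := Finset.univ.filter (fun Q => Q ∈ H) with hT
  set c : Submodule F (Fin 4 → F) → ℕ := fun W => Nat.card ↥(H ∩ {P | P.rep ∈ W}) with hc
  have hdc := Finset.sum_card_bipartiteAbove_eq_sum_card_bipartiteBelow (s := S) (t := T)
    (fun W Q => Q.rep ∈ W)
  have hSc : S.card = q ^ 4 + q ^ 2 + 1 := by
    rw [← h1, Nat.card_eq_fintype_card, Fintype.card_subtype]
  have hTc : T.card = (q ^ 3 + 1) * (q ^ 2 + 1) := by
    rw [← hcard, Nat.card_eq_fintype_card, Fintype.card_subtype]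
  have hP₀T : P₀ ∈ T := by simp [hT, hP₀]
  have hL : ∀ W ∈ S, (T.bipartiteAbove (fun W Q => Q.rep ∈ W) W).card = c W := by
    intro W _
    rw [hc]
    simp only [Finset.bipartiteAbove, hT, Finset.filter_filter]
    rw [Nat.card_eq_fintype_card, Fintype.card_subtype]
    congr 1
  have hR1 : (S.bipartiteBelow (fun W (Q : Projectivization F (Fin 4 → F)) => Q.rep ∈ W) P₀).card
      = q ^ 4 + q ^ 2 + 1 := by
    rw [← hSc, Finset.bipartiteBelow, Finset.filter_true_of_mem]
    intro W hW
    exact (Finset.mem_filter.1 hW).2.2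
  have hR2 : ∀ Q ∈ T.erase P₀, (S.bipartiteBelow
      (fun W (Q : Projectivization F (Fin 4 → F)) => Q.rep ∈ W) Q).card = q ^ 2 + 1 := by
    intro Q hQ
    rw [← h2 Q (Finset.ne_of_mem_erase hQ), Nat.card_eq_fintype_card, Fintype.card_subtype,
      Finset.bipartiteBelow, hS, Finset.filter_filter]
  rw [Finset.sum_congr rfl hL, ← Finset.add_sum_erase _ _ hP₀T, hR1, Finset.sum_congr rfl hR2,
    Finset.sum_const, Finset.card_erase_of_mem hP₀T, hTc, smul_eq_mul] at hdc
  have hne : q ^ 3 + 1 ≠ q ^ 3 + q ^ 2 + 1 := by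
    have : 0 < q ^ 2 := by positivity
    omega
  have hS' : ∀ W ∈ S, c W = q ^ 3 + 1 ∨ c W = q ^ 3 + q ^ 2 + 1 := fun W hW =>
    hplane W (Finset.mem_filter.1 hW).2.1
  have hsplit : ∀ W ∈ S, c W = (q ^ 3 + 1) + if c W = q ^ 3 + q ^ 2 + 1 then q ^ 2 else 0 := by
    intro W hW
    rcases hS' W hW with h | h
    · rw [h, if_neg hne]
    · rw [h, if_pos rfl]; ring
  rw [Finset.sum_congr rfl hsplit, Finset.sum_add_distrib, Finset.sum_const, hSc,
    ← Finset.sum_filter, Finset.sum_const, smul_eq_mul, smul_eq_mul] at hdc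
  have hsum := Finset.card_filter_add_card_filter_not (s := S) (fun W => c W = q ^ 3 + q ^ 2 + 1)
  have hnot : S.filter (fun W => ¬ c W = q ^ 3 + q ^ 2 + 1) = S.filter (fun W => c W = q ^ 3 + 1) := by
    apply Finset.filter_congr
    intro W hW
    rcases hS' W hW with h | h
    · simp [h, hq0.ne']
    · simp [h, hq0.ne']
  rw [hnot, hSc] at hsum
  have e : ∀ k : ℕ, Nat.card {W : Submodule F (Fin 4 → F) | Module.finrank F W = 3 ∧ P₀.rep ∈ W ∧
      Nat.card ↥(H ∩ {P | P.rep ∈ W}) = k} = (S.filter (fun W => c W = k)).card := by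
    intro k
    rw [hS, Finset.filter_filter, Nat.card_eq_fintype_card, Fintype.card_subtype]
    congr 1
    ext W
    simp [hc, and_assoc]
  rw [e, e]
  generalize (S.filter (fun W => c W = q ^ 3 + q ^ 2 + 1)).card = s at *
  generalize (S.filter (fun W => c W = q ^ 3 + 1)).card = t at *
  have hsub : (q ^ 3 + 1) * (q ^ 2 + 1) - 1 = q ^ 5 + q ^ 3 + q ^ 2 := by
    have : (q ^ 3 + 1) * (q ^ 2 + 1) = q ^ 5 + q ^ 3 + q ^ 2 + 1 := by ring
    omega
  rw [hsub] at hdc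
  have hs : s = q ^ 3 + q ^ 2 + 1 := by
    have hpos : 0 < q ^ 2 := by positivity
    apply Nat.eq_of_mul_eq_mul_right hpos
    nlinarith [hdc]
  refine ⟨hs, ?_⟩
  omega
end

section
/- Let g₀, g₁, …, g_{n−1} ∈ GF(q)^k, let C = {uG : u ∈ GF(q)^k} be the linear code with generator matrix G having columns g₀,…,g_{n−1}, and let C^⊥ = {d ∈ GF(q)^n : Σ_{i=0}^{n−1} d_i g_i = 0} be its dual. Then for any subset S ⊆ {1, …, n−1}, the vector g₀ lies in the linear span of {g_i : i ∈ S} if and only if there exists d ∈ C^⊥ with d₀ = 1 and d_j = 0 for all j ∉ {0} ∪ S. -/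
/-- Massey's criterion.  For columns `g 0, …, g (n−1)` of a generator
matrix of the code `C`, and any set `S` of positions not containing `0`, the vector
`g 0` lies in the span of `{g i : i ∈ S}` iff there is a dual codeword `d ∈ C^⊥`
(i.e. `∑ i, d i • g i = 0`) with `d 0 = 1` vanishing outside `{0} ∪ S`. -/
theorem statement16 (q n k : ℕ) [NeZero n] (hq : IsPrimePow q)
    (F : Type) [Field F] [Fintype F] (hF : Fintype.card F = q)
    (g : Fin n → (Fin k → F)) (S : Set (Fin n)) (hS : (0 : Fin n) ∉ S) :
    g 0 ∈ Submodule.span F (g '' S) ↔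
      ∃ d : Fin n → F, (∑ i : Fin n, d i • g i = 0) ∧ d 0 = 1 ∧
        ∀ j : Fin n, j ≠ 0 → j ∉ S → d j = 0 := by
  classical
  constructor
  · intro h
    have key : ∀ x ∈ Submodule.span F (g '' S),
        ∃ c : Fin n → F, (∑ i : Fin n, c i • g i = x) ∧ ∀ j, j ∉ S → c j = 0 := by
      intro x hx
      induction hx using Submodule.span_induction with
      | mem x hx =>
        obtain ⟨i, hi, rfl⟩ := hx
        refine ⟨Pi.single i 1, ?_, ?_⟩
        · simp [Pi.single_apply, ite_smul]
        · intro j hj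
          have hji : j ≠ i := fun e => hj (e ▸ hi)
          simp [hji]
      | zero => exact ⟨0, by simp, by simp⟩
      | add x y _ _ hx hy =>
        obtain ⟨c, hc, hc0⟩ := hx
        obtain ⟨e, he, he0⟩ := hy
        refine ⟨c + e, ?_, ?_⟩
        · simp [add_smul, Finset.sum_add_distrib, hc, he]
        · intro j hj
          simp [hc0 j hj, he0 j hj]
      | smul a x _ hx =>
        obtain ⟨c, hc, hc0⟩ := hx
        refine ⟨a • c, ?_, ?_⟩
        · rw [← hc, Finset.smul_sum]
          simp [mul_smul]
        · intro j hj
          simp [hc0 j hj]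
    obtain ⟨c, hc, hc0⟩ := key _ h
    refine ⟨Pi.single 0 1 - c, ?_, ?_, ?_⟩
    · simp only [Pi.sub_apply, sub_smul, Finset.sum_sub_distrib, hc]
      simp [Pi.single_apply, ite_smul]
    · simp [hc0 0 hS]
    · intro j hj hjS
      simp [hj, hc0 j hjS]
  · rintro ⟨d, hd, hd0, hdS⟩
    rw [← Finset.add_sum_erase _ _ (Finset.mem_univ (0 : Fin n)), hd0, one_smul] at hd
    rw [eq_neg_of_add_eq_zero_left hd]
    refine Submodule.neg_mem _ (Submodule.sum_mem _ fun i hi => ?_)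
    by_cases hiS : i ∈ S
    · exact Submodule.smul_mem _ _ (Submodule.subset_span ⟨i, hiS, rfl⟩)
    · rw [hdS i (Finset.ne_of_mem_erase hi) hiS, zero_smul]
      exact Submodule.zero_mem _
end
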